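/- Let V be a partial Steiner triple system on n ≥ 1 points, let V' be the PSTS on n' = 4n² + 10n points obtained from V by attaching to each point x of V a copy Q(x) of the PSTS Q(z) with Q(x) ∩ V = {x}, the n copies being pairwise disjoint outside V. Let P be the Steiner triple system whose points are the nonempty subsets of the point set of V' and whose triples are the 3-sets of subsets with empty symmetric difference. Let U be obtained from P by, for each triple {a,b,c} of V', replacing the four triples {ab,ac,bc}, {a,b,ab}, {a,c,ac}, {b,c,bc} of P by the four triples {a,b,c}, {a,ab,ac}, {b,ab,bc}, {c,ac,bc} (writing a for {a} and ab for {a,b}). Then U is a Steiner triple system, and Aut U ≅ Aut V' ≅ Aut V. -/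

import Mathlib

open Finset

noncomputable section
open scoped Classical

/-- `T` is the set of triples of a Steiner triple system on the finite type `α`:
every pair of distinct points lies in exactly one triple. -/
def IsSTS {α : Type*} (T : Finset (Finset α)) : Prop :=
  (∀ t ∈ T, t.card = 3) ∧
    ∀ p q : α, p ≠ q → ∃! t : Finset α, t ∈ T ∧ p ∈ t ∧ q ∈ t

/-- `T` is the set of triples of a partial Steiner triple system on `α`:
every pair of distinct points lies in at most one triple. -/
def IsPSTS {α : Type*} (T : Finset (Finset α)) : Prop :=
  (∀ t ∈ T, t.card = 3) ∧
    ∀ p q : α, p ≠ q → ∀ t₁ ∈ T, ∀ t₂ ∈ T, p ∈ t₁ → q ∈ t₁ → p ∈ t₂ → q ∈ t₂ → t₁ = t₂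

/-- `W` is a (closed) subsystem of the triple system `T`. -/
def IsSub {α : Type*} (T : Finset (Finset α)) (W : Finset α) : Prop :=
  ∀ t ∈ T, 2 ≤ (t ∩ W).card → t ⊆ W

/-- `g` is an automorphism of the triple system `T`. -/
def IsAut {α : Type*} (T : Finset (Finset α)) (g : Equiv.Perm α) : Prop :=
  ∀ t : Finset α, t ∈ T ↔ t.image g ∈ T

/-- The automorphism group of a triple system, as a subgroup of the permutation group. -/
def autGroup {α : Type*} (T : Finset (Finset α)) : Subgroup (Equiv.Perm α) where
  carrier := {g : Equiv.Perm α | IsAut T g}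
  one_mem' := by
    intro t
    simp
  mul_mem' := by
    intro a b ha hb t
    have h1 := hb t
    have h2 := ha (t.image b)
    have key : t.image ⇑(a * b) = (t.image ⇑b).image ⇑a := by
      rw [Equiv.Perm.coe_mul, Finset.image_image]
    rw [key, ← h2]
    exact h1
  inv_mem' := by
    intro a ha t
    have h := ha (t.image ⇑a⁻¹)
    have key : (t.image ⇑a⁻¹).image ⇑a = t := by
      rw [Finset.image_image]
      have hc : (⇑a ∘ ⇑a⁻¹) = id := by
        funext x
        simp
      rw [hc, Finset.image_id]
    rw [key] at h
    exact h.symm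

/-- `φ` embeds the triple system `S` onto a subsystem of `T`: it is injective, maps
triples of `S` to triples of `T`, and the triples of `T` inside the image of `φ` are
precisely the images of the triples of `S`. -/
def IsCopy {α β : Type*} [Fintype α] (S : Finset (Finset α)) (T : Finset (Finset β))
    (φ : α → β) : Prop :=
  Function.Injective φ ∧ (∀ s ∈ S, s.image φ ∈ T) ∧
    ∀ t ∈ T, t ⊆ Finset.univ.image φ → ∃ s ∈ S, t = s.image φ

/-- The point set `W` is invariant under every automorphism of `T`. -/
def AutInvariant {β : Type*} (T : Finset (Finset β)) (W : Finset β) : Prop :=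
  ∀ g : Equiv.Perm β, IsAut T g → W.image g = W

/-- For the copy of `S` inside `T` given by `φ`, restriction gives a group isomorphism
from `Aut T` onto `Aut S`: every automorphism of `T` induces (via `φ`) an automorphism
of `S`, and every automorphism of `S` is induced by exactly one automorphism of `T`. -/
def AutRestrictIso {α β : Type*} (T : Finset (Finset β)) (S : Finset (Finset α))
    (φ : α → β) : Prop :=
  (∀ g : Equiv.Perm β, IsAut T g →
      ∃ h : Equiv.Perm α, IsAut S h ∧ ∀ x : α, g (φ x) = φ (h x)) ∧
    ∀ h : Equiv.Perm α, IsAut S h →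
      ∃! g : Equiv.Perm β, IsAut T g ∧ ∀ x : α, g (φ x) = φ (h x)

/-- `φ` embeds `S` as an `Aut T`-invariant subsystem of `T` on which `Aut T` induces
the full automorphism group of `S`, with `Aut T ≅ Aut S` via restriction. -/
def FullEmbedding {α β : Type*} [Fintype α] (S : Finset (Finset α)) (T : Finset (Finset β))
    (φ : α → β) : Prop :=
  IsCopy S T φ ∧ AutInvariant T (Finset.univ.image φ) ∧ AutRestrictIso T S φ

/-- The points of the projective space `PG(n,2)`: nonzero vectors of `GF(2)^{n+1}`. -/
abbrev PGPoint (n : ℕ) := {x : Fin (n + 1) → ZMod 2 // x ≠ 0}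

/-- The lines of `PG(n,2)`: 3-sets of nonzero vectors summing to `0`. -/
def PGTriples (n : ℕ) : Finset (Finset (PGPoint n)) :=
  Finset.univ.filter fun t : Finset (PGPoint n) =>
    t.card = 3 ∧ ∑ v ∈ t, (v : Fin (n + 1) → ZMod 2) = 0

/-- The smallest subsystem of `T` containing the point set `P`. -/
def GeneratedSub {α : Type*} [Fintype α] (T : Finset (Finset α)) (P : Finset α) : Finset α :=
  Finset.univ.filter fun x => ∀ W : Finset α, IsSub T W → P ⊆ W → x ∈ W

/-- `W` is a subsystem of `T` isomorphic to `PG(n,2)`. -/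
def IsPGSub {α : Type*} [Fintype α] (n : ℕ) (T : Finset (Finset α)) (W : Finset α) : Prop :=
  ∃ φ : PGPoint n → α, IsCopy (PGTriples n) T φ ∧ Finset.univ.image φ = W

/-- A triple system is `PG(2,2)`-paired if any two distinct points lie in at least two
subsystems isomorphic to `PG(2,2)`. -/
def PG22Paired {α : Type*} [Fintype α] (T : Finset (Finset α)) : Prop :=
  ∀ p q : α, p ≠ q → ∃ W₁ W₂ : Finset α, W₁ ≠ W₂ ∧
    (p ∈ W₁ ∧ q ∈ W₁ ∧ IsPGSub 2 T W₁) ∧ p ∈ W₂ ∧ q ∈ W₂ ∧ IsPGSub 2 T W₂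

/-- `T` is `PG(3,2)`-2-pointed with respect to the points `p, q`: any four points
including `p` and `q` generate a subsystem isomorphic to `PG(2,2)` or `PG(3,2)`. -/
def PG32TwoPointed {α : Type*} [Fintype α] (T : Finset (Finset α)) (p q : α) : Prop :=
  p ≠ q ∧ ∀ s : Finset α, s.card = 4 → p ∈ s → q ∈ s →
    IsPGSub 2 T (GeneratedSub T s) ∨ IsPGSub 3 T (GeneratedSub T s)

/-- The copy of `Y` inside `2Y+1`. -/
def dp0 {γ : Type*} (a : γ) : γ ⊕ γ ⊕ Unit := Sum.inl a

/-- The disjoint copy `Y₁` of `Y` inside `2Y+1`. -/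
def dp1 {γ : Type*} (a : γ) : γ ⊕ γ ⊕ Unit := Sum.inr (Sum.inl a)

/-- The extra point `*` of `2Y+1`. -/
def dpStar {γ : Type*} : γ ⊕ γ ⊕ Unit := Sum.inr (Sum.inr ())

/-- The triples of the Steiner triple system `2Y+1` built from a system `Y` with
triple set `T`. -/
def DoubleTriples {γ : Type*} [Fintype γ] (T : Finset (Finset γ)) :
    Finset (Finset (γ ⊕ γ ⊕ Unit)) :=
  Finset.univ.filter fun t : Finset (γ ⊕ γ ⊕ Unit) =>
    (∃ s ∈ T, t = s.image dp0) ∨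
    (∃ a : γ, t = {dpStar, dp0 a, dp1 a}) ∨
    (∃ a b c : γ, ({a, b, c} : Finset γ) ∈ T ∧ t = {dp1 a, dp1 b, dp0 c})

/-- The triples of the direct product of two triple systems. -/
def ProdTriples {α β : Type*} [Fintype α] [Fintype β]
    (TA : Finset (Finset α)) (TB : Finset (Finset β)) : Finset (Finset (α × β)) :=
  Finset.univ.filter fun t : Finset (α × β) =>
    (∃ a : α, ∃ s ∈ TB, t = s.image fun b => (a, b)) ∨
    (∃ b : β, ∃ s ∈ TA, t = s.image fun a => (a, b)) ∨
    (∃ a₁ a₂ a₃ : α, ∃ b₁ b₂ b₃ : β, ({a₁, a₂, a₃} : Finset α) ∈ TA ∧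
      ({b₁, b₂, b₃} : Finset β) ∈ TB ∧ t = {(a₁, b₁), (a₂, b₂), (a₃, b₃)})

/-- The triples of Moore's construction `U = X ∪ (V × A)`.  Here `TX` (on `δ`), `TV`
(on `α`), `TY` (on `γ`) are the triple sets of `X`, `V`, `Y`; `j : δ → γ` embeds `X`
as a subsystem of `Y` and `ℓ : A → γ` labels `Y − X` by the group `A`. -/
def MooreTriples {δ α γ A : Type*} [Fintype δ] [Fintype α] [Fintype A] [Group A]
    (TX : Finset (Finset δ)) (TV : Finset (Finset α)) (TY : Finset (Finset γ))
    (j : δ → γ) (ℓ : A → γ) : Finset (Finset (δ ⊕ α × A)) :=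
  Finset.univ.filter fun t : Finset (δ ⊕ α × A) =>
    (∃ s ∈ TX, t = s.image Sum.inl) ∨
    (∃ v : α, ∃ a₁ a₂ : A, ∃ x : δ, ({ℓ a₁, ℓ a₂, j x} : Finset γ) ∈ TY ∧
      t = {Sum.inr (v, a₁), Sum.inr (v, a₂), Sum.inl x}) ∨
    (∃ v : α, ∃ a₁ a₂ a₃ : A, ({ℓ a₁, ℓ a₂, ℓ a₃} : Finset γ) ∈ TY ∧
      t = {Sum.inr (v, a₁), Sum.inr (v, a₂), Sum.inr (v, a₃)}) ∨
    (∃ v₁ v₂ v₃ : α, ∃ a₁ a₂ a₃ : A, ({v₁, v₂, v₃} : Finset α) ∈ TV ∧ a₁ * a₂ * a₃ = 1 ∧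
      t = {Sum.inr (v₁, a₁), Sum.inr (v₂, a₂), Sum.inr (v₃, a₃)})

/-- The hypotheses of Moore's construction: `Y` and `V` are Steiner triple systems,
`A` is a cyclic group, `j` embeds `X` as a subsystem of `Y` (with triple set `TX`),
and `ℓ` is a bijective labeling of `Y − X` by `A`. -/
def MooreSetup {δ α γ A : Type*} [Fintype δ] [Group A]
    (TX : Finset (Finset δ)) (TV : Finset (Finset α)) (TY : Finset (Finset γ))
    (j : δ → γ) (ℓ : A → γ) : Prop :=
  IsSTS TY ∧ IsSTS TV ∧ IsCyclic A ∧ Function.Injective j ∧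
    IsSub TY (Finset.univ.image j) ∧ IsCopy TX TY j ∧
    Function.Injective ℓ ∧ Set.range ℓ = (Set.range j)ᶜ

/-- The subsystem `Y_v = X ∪ (v × A)` of Moore's construction. -/
def MooreY {δ α A : Type*} [Fintype δ] [Fintype A] (v : α) : Finset (δ ⊕ α × A) :=
  (Finset.univ.image (Sum.inl : δ → δ ⊕ α × A)) ∪
    Finset.univ.image fun a : A => (Sum.inr (v, a) : δ ⊕ α × A)

/-- A subsystem of type (3.1) of Moore's construction, where `ε` denotes the unique
involution `−1` of `A`: the seven points `x, (v_i, a_i), (v_i, −a_i)` for a triple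
`{v₁,v₂,v₃}` of `V`, with `a₁a₂a₃ = 1` and `{a_i, −a_i, x}` a triple of `Y`. -/
def MooreType31 {δ α γ A : Type*} [Group A] (TV : Finset (Finset α))
    (TY : Finset (Finset γ)) (j : δ → γ) (ℓ : A → γ) (ε : A)
    (W : Finset (δ ⊕ α × A)) : Prop :=
  ∃ v₁ v₂ v₃ : α, ∃ a₁ a₂ a₃ : A, ∃ x : δ,
    ({v₁, v₂, v₃} : Finset α) ∈ TV ∧ a₁ * a₂ * a₃ = 1 ∧
    ({ℓ a₁, ℓ (ε * a₁), j x} : Finset γ) ∈ TY ∧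
    ({ℓ a₂, ℓ (ε * a₂), j x} : Finset γ) ∈ TY ∧
    ({ℓ a₃, ℓ (ε * a₃), j x} : Finset γ) ∈ TY ∧
    W = {Sum.inl x, Sum.inr (v₁, a₁), Sum.inr (v₁, ε * a₁), Sum.inr (v₂, a₂),
         Sum.inr (v₂, ε * a₂), Sum.inr (v₃, a₃), Sum.inr (v₃, ε * a₃)}

/-- The point set of a family of triples. -/
def ptsOf {β : Type*} (T : Finset (Finset β)) : Finset β := T.sup id

/-- Adjacency of triples: two distinct triples of `T` meeting in a point. -/
def TriAdj {β : Type*} (T : Finset (Finset β)) (t s : Finset β) : Prop :=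
  t ∈ T ∧ s ∈ T ∧ t ≠ s ∧ (t ∩ s).Nonempty

/-- A partial Steiner triple system is cyclic if the graph whose vertices are its
triples, two joined when they meet, is a cycle (equivalently: it has at least three
triples, every triple meets exactly two others, and the graph is connected). -/
def IsCyclicPSTS {β : Type*} (T : Finset (Finset β)) : Prop :=
  3 ≤ T.card ∧ (∀ t ∈ T, (T.filter fun s => s ≠ t ∧ (s ∩ t).Nonempty).card = 2) ∧
    ∀ t ∈ T, ∀ s ∈ T, Relation.ReflTransGen (TriAdj T) t s

/-- The partial Steiner triple system `Q(z)` (for the parameter `n`), with triple set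
`T`, point set `P` and distinguished point `z`: two cyclic PSTSs `C₁, C₂` on
`2n+4` and `2n+6` points meeting exactly in the point `z`, which lies in two triples
of each, triples `{z, z'_i, z_i}` of `C_i` with `z'_i` in two triples of `C_i`, and a
new point `z'` in the single additional triple `{z'_1, z', z'_2}`. -/
def IsQ {β : Type*} (n : ℕ) (T : Finset (Finset β)) (P : Finset β) (z : β) : Prop :=
  ∃ C₁ C₂ : Finset (Finset β), ∃ z' z₁' z₂' z₁ z₂ : β,
    IsPSTS T ∧ IsCyclicPSTS C₁ ∧ IsCyclicPSTS C₂ ∧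
    (ptsOf C₁).card = 2 * n + 4 ∧ (ptsOf C₂).card = 2 * n + 6 ∧
    ptsOf C₁ ∩ ptsOf C₂ = {z} ∧
    (C₁.filter fun t => z ∈ t).card = 2 ∧ (C₂.filter fun t => z ∈ t).card = 2 ∧
    ({z, z₁', z₁} : Finset β) ∈ C₁ ∧ (C₁.filter fun t => z₁' ∈ t).card = 2 ∧
    ({z, z₂', z₂} : Finset β) ∈ C₂ ∧ (C₂.filter fun t => z₂' ∈ t).card = 2 ∧
    z' ∉ ptsOf C₁ ∪ ptsOf C₂ ∧
    T = C₁ ∪ C₂ ∪ {({z₁', z', z₂'} : Finset β)} ∧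
    P = ptsOf C₁ ∪ ptsOf C₂ ∪ {z'}

/-- Nonempty subsets of `β`: the points of the projective space `P` over `GF(2)`
built on a point set `β`. -/
abbrev NESet (β : Type*) := {s : Finset β // s.Nonempty}

/-- The triples of the projective space over `GF(2)` on the nonempty subsets of `β`:
3-sets of subsets with empty symmetric difference. -/
def sdTriples (β : Type*) [Fintype β] : Finset (Finset (NESet β)) :=
  Finset.univ.filter fun t : Finset (NESet β) =>
    ∃ a b c : NESet β, a ≠ b ∧ a ≠ c ∧ b ≠ c ∧ t = {a, b, c} ∧
      symmDiff (symmDiff a.1 b.1) c.1 = ∅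

/-- The singleton `{a}` as a point of the projective space. -/
def sEl {β : Type*} (a : β) : NESet β := ⟨{a}, Finset.singleton_nonempty a⟩

/-- The pair `{a,b}` as a point of the projective space. -/
def pEl {β : Type*} (a b : β) : NESet β := ⟨{a, b}, Finset.insert_nonempty a {b}⟩

/-- The triples of `P` removed in Cameron's construction, for each triple `{a,b,c}`
of `V'`. -/
def removedTriples {β : Type*} [Fintype β] (TV' : Finset (Finset β)) :
    Finset (Finset (NESet β)) :=
  Finset.univ.filter fun t : Finset (NESet β) =>
    ∃ a b c : β, ({a, b, c} : Finset β) ∈ TV' ∧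
      (t = {pEl a b, pEl a c, pEl b c} ∨ t = {sEl a, sEl b, pEl a b} ∨
       t = {sEl a, sEl c, pEl a c} ∨ t = {sEl b, sEl c, pEl b c})

/-- The new triples of Cameron's construction, for each triple `{a,b,c}` of `V'`. -/
def addedTriples {β : Type*} [Fintype β] (TV' : Finset (Finset β)) :
    Finset (Finset (NESet β)) :=
  Finset.univ.filter fun t : Finset (NESet β) =>
    ∃ a b c : β, ({a, b, c} : Finset β) ∈ TV' ∧
      (t = {sEl a, sEl b, sEl c} ∨ t = {sEl a, pEl a b, pEl a c} ∨
       t = {sEl b, pEl a b, pEl b c} ∨ t = {sEl c, pEl a c, pEl b c})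

/-- The Steiner triple system `U` of Cameron's construction obtained from the
projective space `P` and the partial system `V'`. -/
def CameronSTS {β : Type*} [Fintype β] (TV' : Finset (Finset β)) :
    Finset (Finset (NESet β)) :=
  (sdTriples β \ removedTriples TV') ∪ addedTriples TV'

/-
For a triple `{p, q, r}` of `U`, count the points `x` that complete it to a Pasch configuration,
its four triples being `{p, q, r}`, `{x, p, u}`, `{x, q, v}` and `{u, v, r}`. If the triple is
inherited from the projective space, almost every subset `x` does; if it was added, only subsets
`x` with at most four elements can. So an automorphism of `U` preserves the added triples. A pair
lies in at most two of these, while a singleton `{a}` lies in at least three as soon as `a` lies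
in two triples of `V'`; every triple of `V'` has two such points, so an automorphism preserves
the singletons, on which it acts as an automorphism of `V'`. An automorphism fixing all
singletons is trivial.

In `V'` the points of `V` are those lying in at least four triples, so an automorphism of `V'`
restricts to one of `V`. If it fixes a point `x` of `V`, then it fixes the copy `Q(x)` pointwise:
the two cycles of triples through `x` have different lengths, and the points of degree three in
`Q(x)` orient them.
-/

open scoped symmDiff

section TripleSystems

variable {α β : Type*} {T : Finset (Finset β)} {g : Equiv.Perm β}

theorem ne_of_card_triple [DecidableEq β] {a b c : β} (h : #({a, b, c} : Finset β) = 3) :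
    a ≠ b ∧ a ≠ c ∧ b ≠ c := by
  refine ⟨?_, ?_, ?_⟩ <;> rintro rfl
  · rw [insert_idem] at h
    have := card_le_two (a := a) (b := c)
    omega
  · rw [pair_comm, insert_idem] at h
    have := card_le_two (a := a) (b := b)
    omega
  · rw [pair_eq_singleton] at h
    have := card_le_two (a := a) (b := b)
    omega

theorem exists_eq_triple_of_mem [DecidableEq β] {t : Finset β} (ht : #t = 3) {p q : β}
    (hp : p ∈ t) (hq : q ∈ t) (hpq : p ≠ q) : ∃ r, r ≠ p ∧ r ≠ q ∧ t = {p, q, r} := by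
  have hq' : q ∈ t.erase p := mem_erase.2 ⟨hpq.symm, hq⟩
  obtain ⟨r, hr⟩ := card_eq_one.1 (show #((t.erase p).erase q) = 1 by
    rw [card_erase_of_mem hq', card_erase_of_mem hp, ht])
  have hr' : r ∈ (t.erase p).erase q := hr ▸ mem_singleton_self r
  simp only [mem_erase] at hr'
  refine ⟨r, hr'.2.1, hr'.1, ?_⟩
  rw [← hr, insert_erase hq', insert_erase hp]

theorem exists_eq_triple [DecidableEq β] {t : Finset β} (ht : #t = 3) {a : β} (ha : a ∈ t) :
    ∃ b c, t = {a, b, c} := by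
  obtain ⟨b, hb, hba⟩ := exists_mem_ne (by rw [ht]; norm_num) a
  obtain ⟨c, -, -, rfl⟩ := exists_eq_triple_of_mem ht ha hb hba.symm
  exact ⟨b, c, rfl⟩

theorem IsSTS.isPSTS (hT : IsSTS T) : IsPSTS T :=
  ⟨hT.1, fun p q hpq _ h₁ _ h₂ hp₁ hq₁ hp₂ hq₂ =>
    (hT.2 p q hpq).unique ⟨h₁, hp₁, hq₁⟩ ⟨h₂, hp₂, hq₂⟩⟩

theorem IsPSTS.eq_of_triple_mem [DecidableEq β] (hT : IsPSTS T) {a b c d : β}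
    (h : ({a, b, c} : Finset β) ∈ T) (h' : ({a, b, d} : Finset β) ∈ T) : c = d := by
  obtain ⟨hab, hac, hbc⟩ := ne_of_card_triple (hT.1 _ h)
  have hc : c ∈ ({a, b, d} : Finset β) :=
    hT.2 a b hab _ h _ h' (by simp) (by simp) (by simp) (by simp) ▸ by simp
  simpa [hac.symm, hbc.symm] using hc

theorem IsAut.triple_mem_iff [DecidableEq β] (hg : IsAut T g) (a b c : β) :
    ({a, b, c} : Finset β) ∈ T ↔ ({g a, g b, g c} : Finset β) ∈ T := by
  obtain rfl : ‹DecidableEq β› = fun a b => Classical.propDecidable (a = b) :=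
    Subsingleton.elim _ _
  rw [hg]
  simp only [image_insert, image_singleton]

theorem IsAut.apply_eq_of_triple_mem [DecidableEq β] (hT : IsPSTS T) (hg : IsAut T g) {a b c : β}
    (h : ({a, b, c} : Finset β) ∈ T) (ha : g a = a) (hb : g b = b) : g c = c := by
  have h' := (hg.triple_mem_iff a b c).1 h
  rw [ha, hb] at h'
  exact hT.eq_of_triple_mem h' h

theorem isAut_of_image_mem (h : ∀ t ∈ T, t.image g ∈ T) : IsAut T g := by
  intro t
  refine ⟨h t, fun ht => ?_⟩
  have hinj : Function.Injective fun s : Finset β => s.image g := image_injective g.injective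
  have himage : T.image (fun s => s.image g) = T :=
    eq_of_subset_of_card_le (image_subset_iff.2 h) (card_image_of_injective _ hinj).ge
  rw [← himage, mem_image] at ht
  obtain ⟨s, hs, hst⟩ := ht
  exact hinj hst ▸ hs

theorem isAut_of_triple_mem [DecidableEq β] (hT : ∀ t ∈ T, #t = 3)
    (h : ∀ a b c, a ≠ c → ({a, b, c} : Finset β) ∈ T → ({g a, g b, g c} : Finset β) ∈ T) :
    IsAut T g := by
  refine isAut_of_image_mem fun t ht => ?_
  obtain ⟨a, b, c, -, hac, -, rfl⟩ := card_eq_three.1 (hT t ht)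
  obtain rfl : ‹DecidableEq β› = fun a b => Classical.propDecidable (a = b) :=
    Subsingleton.elim _ _
  simpa only [image_insert, image_singleton] using h a b c hac ht

/-- The degree of a point in a triple system: the number of triples through it. -/
def degree (T : Finset (Finset β)) (y : β) : ℕ := #{s ∈ T | y ∈ s}

theorem card_le_degree {y : β} {S : Finset (Finset β)} (h : ∀ s ∈ S, s ∈ T ∧ y ∈ s) :
    #S ≤ degree T y :=
  card_le_card fun s hs => mem_filter.2 (h s hs)

theorem degree_le_card {y : β} {S : Finset (Finset β)} (h : ∀ s ∈ T, y ∈ s → s ∈ S) :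
    degree T y ≤ #S :=
  card_le_card fun s hs => h s (mem_filter.1 hs).1 (mem_filter.1 hs).2

theorem degree_mono {S : Finset (Finset β)} (h : S ⊆ T) (y : β) : degree S y ≤ degree T y :=
  card_le_card (filter_subset_filter _ h)

theorem degree_pos_iff {y : β} : 0 < degree T y ↔ ∃ t ∈ T, y ∈ t := by
  rw [degree, card_pos]
  exact filter_nonempty_iff

theorem IsAut.degree_eq (hg : IsAut T g) (y : β) : degree T (g y) = degree T y := by
  have hle : ∀ {g : Equiv.Perm β}, IsAut T g → ∀ y, degree T y ≤ degree T (g y) := by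
    intro g hg y
    refine card_le_card_of_injOn (fun s => s.image g) (fun s hs => ?_)
      (image_injective g.injective).injOn
    obtain ⟨hsT, hy⟩ := mem_filter.1 hs
    exact mem_filter.2 ⟨(hg s).1 hsT, mem_image_of_mem g hy⟩
  refine le_antisymm ?_ (hle hg y)
  simpa using hle ((autGroup T).inv_mem hg) (g y)

theorem AutRestrictIso.nonempty_mulEquiv {S : Finset (Finset α)} {φ : α → β}
    (h : AutRestrictIso T S φ) (hφ : Function.Injective φ) :
    Nonempty (autGroup T ≃* autGroup S) := by
  choose r hr hrφ using h.1
  have hr_unique : ∀ (g : autGroup T) (k : Equiv.Perm α), (∀ x, g.1 (φ x) = φ (k x)) →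
      r g.1 g.2 = k := fun g k hk =>
    Equiv.ext fun x => hφ ((hrφ g.1 g.2 x).symm.trans (hk x))
  let f : autGroup T →* autGroup S := MonoidHom.mk' (fun g => ⟨r g.1 g.2, hr g.1 g.2⟩)
    fun a b => Subtype.ext (hr_unique _ _ fun x =>
      (congrArg a.1 (hrφ b.1 b.2 x)).trans (hrφ a.1 a.2 _))
  refine ⟨MulEquiv.ofBijective f ⟨fun a b hab => ?_, ?_⟩⟩
  · have hab' : r a.1 a.2 = r b.1 b.2 := congrArg Subtype.val hab
    obtain ⟨g, -, hg⟩ := h.2 (r a.1 a.2) (hr _ _)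
    exact Subtype.ext ((hg a.1 ⟨a.2, hrφ _ _⟩).trans
      (hg b.1 ⟨b.2, fun x => by rw [hab', hrφ b.1 b.2]⟩).symm)
  · rintro ⟨k, hk⟩
    obtain ⟨g, ⟨hg, hgk⟩, -⟩ := h.2 k hk
    exact ⟨⟨g, hg⟩, Subtype.ext (hr_unique ⟨g, hg⟩ k hgk)⟩

end TripleSystems

section ProjectiveSpace

variable {β : Type*}

@[simp]
theorem sEl_val (a : β) : (sEl a).1 = {a} := rfl

@[simp]
theorem pEl_val (a b : β) : (pEl a b).1 = {a, b} := rfl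

theorem sEl_injective : Function.Injective (sEl : β → NESet β) := fun a b h => by
  simpa [sEl] using h

theorem sEl_ne_pEl (c : β) {a b : β} (hab : a ≠ b) : sEl c ≠ pEl a b := by
  intro h
  have := congrArg (fun p : NESet β => #p.1) h
  simp [hab] at this

theorem pEl_comm (a b : β) : pEl a b = pEl b a := by
  simp [pEl, pair_comm]

theorem pEl_injective (a : β) : Function.Injective (pEl a) := by
  intro b c h
  have h' : ({a, b} : Finset β) = {a, c} := congrArg Subtype.val h
  have hb : b ∈ ({a, c} : Finset β) := h' ▸ by simp
  have hc : c ∈ ({a, b} : Finset β) := h' ▸ by simp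
  grind

theorem sEl_val_ssubset {s : Finset β} (hs : 1 < #s) {a : β} (ha : a ∈ s) : (sEl a).1 ⊂ s := by
  refine Finset.ssubset_iff_subset_ne.2 ⟨singleton_subset_iff.2 ha, ?_⟩
  rintro rfl
  simp [sEl] at hs

theorem pEl_val_ssubset {s : Finset β} (hs : 2 < #s) {a b : β} (ha : a ∈ s) (hb : b ∈ s) :
    (pEl a b).1 ⊂ s := by
  refine Finset.ssubset_iff_subset_ne.2 ⟨by simp [insert_subset_iff, ha, hb], ?_⟩
  rintro rfl
  exact hs.not_ge card_le_two

theorem val_ssubset_triple {a b c : β} (h : #({a, b, c} : Finset β) = 3) :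
    ∀ x ∈ ({sEl a, sEl b, sEl c, pEl a b, pEl a c, pEl b c} : Finset (NESet β)),
      x.1 ⊂ {a, b, c} := by
  have h' : 1 < #({a, b, c} : Finset β) := by omega
  simp [-sEl_val, -pEl_val, sEl_val_ssubset h', pEl_val_ssubset h.ge]

theorem symmDiff_symmDiff_val_eq {p q r u v w : NESet β} (hpqr : #{p, q, r} = 3)
    (h : ({p, q, r} : Finset (NESet β)) = {u, v, w}) :
    p.1 ∆ q.1 ∆ r.1 = u.1 ∆ v.1 ∆ w.1 := by
  have fold_eq : ∀ {x y z : NESet β}, #{x, y, z} = 3 →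
      fold symmDiff ⊥ Subtype.val {x, y, z} = x.1 ∆ y.1 ∆ z.1 := by
    intro x y z hxyz
    obtain ⟨hxy, hxz, hyz⟩ := ne_of_card_triple hxyz
    rw [fold_insert (by simp [hxy, hxz]), fold_insert (by simpa using hyz), fold_singleton,
      symmDiff_bot, symmDiff_assoc]
  rw [← fold_eq hpqr, ← fold_eq (h ▸ hpqr), h]

theorem exists_image_eq_of_val_ssubset {e : Fin 3 → β} {p : NESet β} (h : p.1 ⊂ univ.image e) :
    ∃ P : Finset (Fin 3), P.Nonempty ∧ P ≠ univ ∧ p.1 = P.image e := by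
  obtain ⟨P, -, hP⟩ := subset_image_iff.1 h.1
  refine ⟨P, image_nonempty.1 (hP ▸ p.2), ?_, hP.symm⟩
  rintro rfl
  exact h.ne hP.symm

theorem triple_eq_of_val_eq_image {e : Fin 3 → β} {p q r u v w : NESet β}
    {P Q R U V W : Finset (Fin 3)} (h : ({P, Q, R} : Finset (Finset (Fin 3))) = {U, V, W})
    (hp : p.1 = P.image e) (hq : q.1 = Q.image e) (hr : r.1 = R.image e)
    (hu : u.1 = U.image e) (hv : v.1 = V.image e) (hw : w.1 = W.image e) :
    ({p, q, r} : Finset (NESet β)) = {u, v, w} := by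
  apply image_injective Subtype.val_injective
  simpa only [image_insert, image_singleton, hp, hq, hr, hu, hv, hw] using
    congrArg (image (image e)) h

theorem univ_image_fin_three (a b c : β) : univ.image ![a, b, c] = {a, b, c} := by
  ext x
  simp [Fin.exists_fin_succ, eq_comm]

theorem injective_fin_three {a b c : β} (hab : a ≠ b) (hac : a ≠ c) (hbc : b ≠ c) :
    Function.Injective ![a, b, c] := by
  intro i j
  fin_cases i <;> fin_cases j <;> simp [hab, hac, hbc, hab.symm, hac.symm, hbc.symm]

theorem fin_three_line_cases : ∀ P Q R : Finset (Fin 3), P.Nonempty → Q.Nonempty → R.Nonempty →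
    P ≠ univ → Q ≠ univ → R ≠ univ → P ≠ Q → P ∆ Q = R →
    ({P, Q, R} : Finset (Finset (Fin 3))) = {{0, 1}, {0, 2}, {1, 2}} ∨
    ({P, Q, R} : Finset (Finset (Fin 3))) = {{0}, {1}, {0, 1}} ∨
    ({P, Q, R} : Finset (Finset (Fin 3))) = {{0}, {2}, {0, 2}} ∨
    ({P, Q, R} : Finset (Finset (Fin 3))) = {{1}, {2}, {1, 2}} := by
  decide

theorem fin_three_switched_cases : ∀ P Q R : Finset (Fin 3), P.Nonempty → Q.Nonempty →
    R.Nonempty → P ≠ univ → Q ≠ univ → R ≠ univ → P ≠ Q → P ∆ Q ∆ R = univ →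
    ({P, Q, R} : Finset (Finset (Fin 3))) = {{0}, {1}, {2}} ∨
    ({P, Q, R} : Finset (Finset (Fin 3))) = {{0}, {0, 1}, {0, 2}} ∨
    ({P, Q, R} : Finset (Finset (Fin 3))) = {{1}, {0, 1}, {1, 2}} ∨
    ({P, Q, R} : Finset (Finset (Fin 3))) = {{2}, {0, 2}, {1, 2}} := by
  decide

theorem card_triple_of_symmDiff_eq {p q r : NESet β} {s : Finset β} (hp : p.1 ⊂ s) (hq : q.1 ⊂ s)
    (hr : r.1 ⊂ s) (h : p.1 ∆ q.1 ∆ r.1 = s) : #({p, q, r} : Finset (NESet β)) = 3 := by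
  refine card_eq_three.2 ⟨p, q, r, ?_, ?_, ?_, rfl⟩ <;> rintro rfl
  · exact hr.ne (by rw [← h, symmDiff_self, bot_symmDiff])
  · exact hq.ne (by rw [← h, symmDiff_comm p.1, symmDiff_assoc, symmDiff_self, symmDiff_bot])
  · exact hp.ne (by rw [← h, symmDiff_assoc, symmDiff_self, symmDiff_bot])

variable [Fintype β] {T : Finset (Finset β)}

theorem card_of_mem_sdTriples {t : Finset (NESet β)} (ht : t ∈ sdTriples β) : #t = 3 := by
  obtain ⟨a, b, c, hab, hac, hbc, rfl, -⟩ := (mem_filter.1 ht).2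
  exact card_eq_three.2 ⟨a, b, c, hab, hac, hbc, rfl⟩

theorem mem_sdTriples_iff {p q r : NESet β} :
    ({p, q, r} : Finset (NESet β)) ∈ sdTriples β ↔ p ≠ q ∧ p.1 ∆ q.1 = r.1 := by
  constructor
  · intro h
    have hcard := card_of_mem_sdTriples h
    obtain ⟨a, b, c, -, -, -, habc, hsum⟩ := (mem_filter.1 h).2
    rw [← symmDiff_symmDiff_val_eq hcard habc] at hsum
    exact ⟨(ne_of_card_triple hcard).1, symmDiff_eq_bot.1 hsum⟩
  · rintro ⟨hpq, h⟩
    refine mem_filter.2 ⟨mem_univ _, p, q, r, hpq, ?_, ?_, rfl, symmDiff_eq_bot.2 h⟩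
    · rintro rfl
      exact q.2.ne_empty (symmDiff_eq_left.1 h)
    · rintro rfl
      exact p.2.ne_empty (symmDiff_eq_right.1 h)

theorem removedTriples_subset_sdTriples (hT : ∀ s ∈ T, #s = 3) :
    removedTriples T ⊆ sdTriples β := by
  intro t ht
  obtain ⟨a, b, c, hs, ht⟩ := (mem_filter.1 ht).2
  obtain ⟨hab, hac, hbc⟩ := ne_of_card_triple (hT _ hs)
  rcases ht with rfl | rfl | rfl | rfl <;> rw [mem_sdTriples_iff]
  · refine ⟨(pEl_injective a).ne hbc, ?_⟩
    ext x
    grind [pEl_val, mem_symmDiff]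
  all_goals
    refine ⟨sEl_injective.ne ‹_›, ?_⟩
    ext x
    grind [sEl_val, pEl_val, mem_symmDiff]

theorem ssubset_of_mem_removedTriples (hT : ∀ s ∈ T, #s = 3) {t : Finset (NESet β)}
    (ht : t ∈ removedTriples T) : ∃ s ∈ T, ∀ x ∈ t, x.1 ⊂ s := by
  obtain ⟨a, b, c, hs, ht⟩ := (mem_filter.1 ht).2
  refine ⟨_, hs, fun x hx => val_ssubset_triple (hT _ hs) x (mem_of_subset ?_ hx)⟩
  rcases ht with rfl | rfl | rfl | rfl <;> simp [insert_subset_iff]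

theorem mem_removedTriples_iff (hT : ∀ s ∈ T, #s = 3) {p q r : NESet β} :
    ({p, q, r} : Finset (NESet β)) ∈ removedTriples T ↔
      (p ≠ q ∧ p.1 ∆ q.1 = r.1) ∧ ∃ s ∈ T, p.1 ⊂ s ∧ q.1 ⊂ s ∧ r.1 ⊂ s := by
  constructor
  · intro h
    refine ⟨mem_sdTriples_iff.1 (removedTriples_subset_sdTriples hT h), ?_⟩
    simpa using ssubset_of_mem_removedTriples hT h
  · rintro ⟨⟨hpq, hr⟩, s, hs, hps, hqs, hrs⟩
    obtain ⟨a, b, c, hab, hac, hbc, rfl⟩ := card_eq_three.1 (hT s hs)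
    have he := injective_fin_three hab hac hbc
    rw [← univ_image_fin_three] at hps hqs hrs
    obtain ⟨P, hP, hP', hpP⟩ := exists_image_eq_of_val_ssubset hps
    obtain ⟨Q, hQ, hQ', hqQ⟩ := exists_image_eq_of_val_ssubset hqs
    obtain ⟨R, hR, hR', hrR⟩ := exists_image_eq_of_val_ssubset hrs
    have hPQ : P ≠ Q := by
      rintro rfl
      exact hpq (Subtype.ext (hpP.trans hqQ.symm))
    have hPQR : P ∆ Q = R := image_injective he (by
      rw [image_symmDiff _ _ he, ← hpP, ← hqQ, ← hrR, hr])
    refine mem_filter.2 ⟨mem_univ _, a, b, c, hs, ?_⟩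
    refine (fin_three_line_cases P Q R hP hQ hR hP' hQ' hR' hPQ hPQR).imp ?_
      (Or.imp ?_ (Or.imp ?_ ?_)) <;> intro h <;>
    exact triple_eq_of_val_eq_image h hpP hqQ hrR (by simp) (by simp) (by simp)

theorem exists_eq_triple_of_mem_addedTriples (hT : ∀ s ∈ T, #s = 3) {t : Finset (NESet β)}
    (ht : t ∈ addedTriples T) : ∃ p q r, t = {p, q, r} ∧
      ∃ s ∈ T, p.1 ⊂ s ∧ q.1 ⊂ s ∧ r.1 ⊂ s ∧ p.1 ∆ q.1 ∆ r.1 = s := by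
  obtain ⟨a, b, c, hs, ht⟩ := (mem_filter.1 ht).2
  obtain ⟨hab, hac, hbc⟩ := ne_of_card_triple (hT _ hs)
  have hsub := val_ssubset_triple (hT _ hs)
  rcases ht with rfl | rfl | rfl | rfl <;>
  · refine ⟨_, _, _, rfl, _, hs, hsub _ (by simp), hsub _ (by simp), hsub _ (by simp), ?_⟩
    clear hsub
    ext x
    grind [sEl_val, pEl_val, mem_symmDiff]

theorem card_of_mem_addedTriples (hT : ∀ s ∈ T, #s = 3) {t : Finset (NESet β)}
    (ht : t ∈ addedTriples T) : #t = 3 := by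
  obtain ⟨p, q, r, rfl, s, -, hp, hq, hr, hsum⟩ := exists_eq_triple_of_mem_addedTriples hT ht
  exact card_triple_of_symmDiff_eq hp hq hr hsum

theorem mem_addedTriples_iff (hT : ∀ s ∈ T, #s = 3) {p q r : NESet β} :
    ({p, q, r} : Finset (NESet β)) ∈ addedTriples T ↔
      ∃ s ∈ T, p.1 ⊂ s ∧ q.1 ⊂ s ∧ r.1 ⊂ s ∧ p.1 ∆ q.1 ∆ r.1 = s := by
  constructor
  · intro h
    obtain ⟨u, v, w, huvw, s, hs, hu, hv, hw, hsum⟩ :=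
      exists_eq_triple_of_mem_addedTriples hT h
    have hsub : ∀ x ∈ ({p, q, r} : Finset (NESet β)), x.1 ⊂ s := by
      rw [huvw]
      simp [hu, hv, hw]
    rw [← symmDiff_symmDiff_val_eq (card_of_mem_addedTriples hT h) huvw] at hsum
    exact ⟨s, hs, hsub p (by simp), hsub q (by simp), hsub r (by simp), hsum⟩
  · rintro ⟨s, hs, hps, hqs, hrs, hsum⟩
    have hpq : p ≠ q := (ne_of_card_triple (card_triple_of_symmDiff_eq hps hqs hrs hsum)).1
    obtain ⟨a, b, c, hab, hac, hbc, rfl⟩ := card_eq_three.1 (hT s hs)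
    have he := injective_fin_three hab hac hbc
    rw [← univ_image_fin_three] at hps hqs hrs hsum
    obtain ⟨P, hP, hP', hpP⟩ := exists_image_eq_of_val_ssubset hps
    obtain ⟨Q, hQ, hQ', hqQ⟩ := exists_image_eq_of_val_ssubset hqs
    obtain ⟨R, hR, hR', hrR⟩ := exists_image_eq_of_val_ssubset hrs
    have hPQ : P ≠ Q := by
      rintro rfl
      exact hpq (Subtype.ext (hpP.trans hqQ.symm))
    have hPQR : P ∆ Q ∆ R = univ := image_injective he (by
      rw [image_symmDiff _ _ he, image_symmDiff _ _ he, ← hpP, ← hqQ, ← hrR, hsum])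
    refine mem_filter.2 ⟨mem_univ _, a, b, c, hs, ?_⟩
    refine (fin_three_switched_cases P Q R hP hQ hR hP' hQ' hR' hPQ hPQR).imp ?_
      (Or.imp ?_ (Or.imp ?_ ?_)) <;> intro h <;>
    exact triple_eq_of_val_eq_image h hpP hqQ hrR (by simp) (by simp) (by simp)

end ProjectiveSpace

section Cameron

variable {β : Type*} {T : Finset (Finset β)}

theorem IsPSTS.eq_of_val_subset (hT : IsPSTS T) {p q : NESet β} (hpq : p ≠ q) {s s' : Finset β}
    (hs : s ∈ T) (hs' : s' ∈ T) (hps : p.1 ⊆ s) (hqs : q.1 ⊆ s) (hps' : p.1 ⊆ s')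
    (hqs' : q.1 ⊆ s') : s = s' := by
  have hunion : 1 < #(p.1 ∪ q.1) := by
    by_contra! hle
    have hp := eq_of_subset_of_card_le (subset_union_left (s₂ := q.1)) (hle.trans p.2.card_pos)
    have hq := eq_of_subset_of_card_le (subset_union_right (s₁ := p.1)) (hle.trans q.2.card_pos)
    exact hpq (Subtype.ext (hp.trans hq.symm))
  obtain ⟨x, hx, y, hy, hxy⟩ := one_lt_card.1 hunion
  have hsub := union_subset hps hqs
  have hsub' := union_subset hps' hqs'
  exact hT.2 x y hxy s hs s' hs' (hsub hx) (hsub hy) (hsub' hx) (hsub' hy)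

theorem symmDiff_ssubset_of_symmDiff_eq {p q r s : Finset β} (hp : p ⊆ s) (hq : q ⊆ s)
    (hr : r.Nonempty) (h : p ∆ q ∆ r = s) : p ∆ q ⊂ s := by
  refine Finset.ssubset_iff_subset_ne.2
    ⟨symmDiff_subset_union.trans (union_subset hp hq), fun heq => ?_⟩
  rw [heq, symmDiff_eq_left] at h
  exact hr.ne_empty h

theorem symmDiff_val_nonempty {p q : NESet β} (hpq : p ≠ q) : (p.1 ∆ q.1).Nonempty :=
  symmDiff_nonempty.2 fun h => hpq (Subtype.ext h)

variable [Fintype β]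

theorem addedTriples_subset_cameronSTS : addedTriples T ⊆ CameronSTS T :=
  subset_union_right

theorem mem_cameronSTS_iff (hT : ∀ s ∈ T, #s = 3) {p q r : NESet β} :
    ({p, q, r} : Finset (NESet β)) ∈ CameronSTS T ↔
      (p ≠ q ∧ p.1 ∆ q.1 = r.1 ∧ ¬ ∃ s ∈ T, p.1 ⊂ s ∧ q.1 ⊂ s ∧ r.1 ⊂ s) ∨
      ∃ s ∈ T, p.1 ⊂ s ∧ q.1 ⊂ s ∧ r.1 ⊂ s ∧ p.1 ∆ q.1 ∆ r.1 = s := by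
  rw [CameronSTS, mem_union, mem_sdiff, mem_sdTriples_iff, mem_removedTriples_iff hT,
    mem_addedTriples_iff hT]
  refine or_congr_left ⟨fun ⟨h, hn⟩ => ⟨h.1, h.2, fun h' => hn ⟨h, h'⟩⟩, ?_⟩
  exact fun ⟨hpq, h, hn⟩ => ⟨⟨hpq, h⟩, fun h' => hn h'.2⟩

theorem card_of_mem_cameronSTS (hT : ∀ s ∈ T, #s = 3) {t : Finset (NESet β)}
    (ht : t ∈ CameronSTS T) : #t = 3 := by
  rcases mem_union.1 ht with ht | ht
  · exact card_of_mem_sdTriples (mem_sdiff.1 ht).1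
  · exact card_of_mem_addedTriples hT ht

theorem eq_of_triple_mem_cameronSTS (hT : IsPSTS T) {p q r r' : NESet β}
    (h : {p, q, r} ∈ CameronSTS T) (h' : {p, q, r'} ∈ CameronSTS T) : r = r' := by
  have hpq := (ne_of_card_triple (card_of_mem_cameronSTS hT.1 h)).1
  rw [mem_cameronSTS_iff hT.1] at h h'
  rcases h with ⟨-, h, hn⟩ | ⟨s, hs, hp, hq, -, h⟩ <;>
  rcases h' with ⟨-, h', hn'⟩ | ⟨s', hs', hp', hq', -, h'⟩
  · exact Subtype.ext (h.symm.trans h')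
  · exact absurd ⟨s', hs', hp', hq',
      h ▸ symmDiff_ssubset_of_symmDiff_eq hp'.1 hq'.1 r'.2 h'⟩ hn
  · exact absurd ⟨s, hs, hp, hq, h' ▸ symmDiff_ssubset_of_symmDiff_eq hp.1 hq.1 r.2 h⟩ hn'
  · obtain rfl := hT.eq_of_val_subset hpq hs hs' hp.1 hq.1 hp'.1 hq'.1
    exact Subtype.ext (symmDiff_right_injective _ (h.trans h'.symm))

theorem exists_triple_mem_cameronSTS (hT : ∀ s ∈ T, #s = 3) {p q : NESet β} (hpq : p ≠ q) :
    ∃ r, {p, q, r} ∈ CameronSTS T := by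
  have hne := symmDiff_val_nonempty hpq
  by_cases h : ∃ s ∈ T, p.1 ⊂ s ∧ q.1 ⊂ s ∧ p.1 ∆ q.1 ⊂ s
  · obtain ⟨s, hs, hp, hq, hr⟩ := h
    refine ⟨⟨p.1 ∆ q.1 ∆ s, symmDiff_nonempty.2 hr.ne⟩, (mem_cameronSTS_iff hT).2 (Or.inr
      ⟨s, hs, hp, hq, Finset.ssubset_iff_subset_ne.2 ⟨?_, fun heq => ?_⟩, ?_⟩)⟩
    · exact symmDiff_subset_union.trans (union_subset hr.1 Subset.rfl)
    · exact hne.ne_empty (symmDiff_eq_right.1 heq)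
    · exact symmDiff_symmDiff_cancel_left _ _
  · exact ⟨⟨_, hne⟩, (mem_cameronSTS_iff hT).2 (Or.inl ⟨hpq, rfl, h⟩)⟩

theorem isSTS_cameronSTS (hT : IsPSTS T) : IsSTS (CameronSTS T) := by
  refine ⟨fun t => card_of_mem_cameronSTS hT.1, fun p q hpq => ?_⟩
  obtain ⟨r, hr⟩ := exists_triple_mem_cameronSTS hT.1 hpq
  refine ⟨{p, q, r}, ⟨hr, by simp, by simp⟩, ?_⟩
  rintro t ⟨ht, hp, hq⟩
  obtain ⟨r', -, -, rfl⟩ := exists_eq_triple_of_mem (card_of_mem_cameronSTS hT.1 ht) hp hq hpq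
  rw [eq_of_triple_mem_cameronSTS hT hr ht]

theorem mem_cameronSTS_iff_of_three_le_card (hT : ∀ s ∈ T, #s = 3) {p q r : NESet β}
    (hp : 3 ≤ #p.1) :
    ({p, q, r} : Finset (NESet β)) ∈ CameronSTS T ↔ p ≠ q ∧ p.1 ∆ q.1 = r.1 := by
  have h : ∀ s ∈ T, ¬ p.1 ⊂ s := fun s hs hps =>
    (card_lt_card hps).not_ge ((hT s hs).trans_le hp)
  rw [mem_cameronSTS_iff hT]
  constructor
  · rintro (⟨hpq, hsum, -⟩ | ⟨s, hs, hps, -⟩)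
    · exact ⟨hpq, hsum⟩
    · exact absurd hps (h s hs)
  · rintro ⟨hpq, hsum⟩
    exact Or.inl ⟨hpq, hsum, fun ⟨s, hs, hps, _⟩ => h s hs hps⟩

end Cameron

section Pasch

/-- The points `x` for which the line through `p` and `q` is the line of a Pasch configuration
missing `x`: `x` is joined to `p` and `q` by triples whose third points `u`, `v` are collinear
with the third point of `p` and `q`. Counting them distinguishes the switched lines of Cameron's
construction from the lines inherited from the projective space. -/
def paschPoints {γ : Type*} [Fintype γ] [DecidableEq γ] (T : Finset (Finset γ)) (p q : γ) :
    Finset γ :=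
  univ.filter fun x => ∃ u v r : γ, ({x, p, u} : Finset γ) ∈ T ∧ ({x, q, v} : Finset γ) ∈ T ∧
    ({u, v, r} : Finset γ) ∈ T ∧ ({p, q, r} : Finset γ) ∈ T

theorem mem_paschPoints {γ : Type*} [Fintype γ] [DecidableEq γ] {T : Finset (Finset γ)}
    {p q x : γ} : x ∈ paschPoints T p q ↔ ∃ u v r : γ, ({x, p, u} : Finset γ) ∈ T ∧
      ({x, q, v} : Finset γ) ∈ T ∧ ({u, v, r} : Finset γ) ∈ T ∧ ({p, q, r} : Finset γ) ∈ T := by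
  rw [paschPoints, mem_filter, and_iff_right (mem_univ x)]

theorem IsAut.card_paschPoints {γ : Type*} [Fintype γ] [DecidableEq γ] {T : Finset (Finset γ)}
    {g : Equiv.Perm γ} (hg : IsAut T g) (p q : γ) :
    #(paschPoints T (g p) (g q)) = #(paschPoints T p q) := by
  refine (card_equiv g fun x => ?_).symm
  rw [mem_paschPoints, mem_paschPoints]
  conv_rhs => rw [g.surjective.exists₃]
  simp only [← hg.triple_mem_iff]

theorem card_le_card_add_card_symmDiff {β : Type*} (x y : Finset β) : #x ≤ #y + #(x ∆ y) := by
  refine (card_le_card fun z hz => ?_).trans (card_union_le _ _)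
  by_cases h : z ∈ y <;> simp [mem_symmDiff, h, hz]

theorem symmDiff_symmDiff_symmDiff_cancel {β : Type*} (x p q : Finset β) :
    (x ∆ p) ∆ (x ∆ q) = p ∆ q := by
  rw [symmDiff_symmDiff_symmDiff_comm, symmDiff_self, bot_symmDiff]

variable {β : Type*} [Fintype β] {T : Finset (Finset β)}

theorem card_le_four_of_mem_paschPoints (hT : IsPSTS T) {p q r x : NESet β}
    (h : {p, q, r} ∈ addedTriples T) (hx : x ∈ paschPoints (CameronSTS T) p q) : #x.1 ≤ 4 := by
  by_contra! hcard
  obtain ⟨u, v, r', hu, hv, huv, hr'⟩ := mem_paschPoints.1 hx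
  obtain rfl := eq_of_triple_mem_cameronSTS hT hr' (addedTriples_subset_cameronSTS h)
  obtain ⟨s, hs, hp, hq, hr, hsum⟩ := (mem_addedTriples_iff hT.1).1 h
  rw [mem_cameronSTS_iff_of_three_le_card hT.1 (by omega)] at hu hv
  have hu_card : 3 ≤ #u.1 := by
    have := card_lt_card hp
    have := hT.1 s hs
    have := card_le_card_add_card_symmDiff x.1 p.1
    rw [hu.2] at this
    omega
  rw [mem_cameronSTS_iff_of_three_le_card hT.1 hu_card, ← hu.2, ← hv.2,
    symmDiff_symmDiff_symmDiff_cancel] at huv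
  rw [huv.2, symmDiff_self] at hsum
  exact hr.1.not_ssubset (hsum ▸ r'.2.empty_ssubset)

theorem mem_paschPoints_of_three_le_card (hT : IsPSTS T) {p q r x : NESet β}
    (h : {p, q, r} ∈ CameronSTS T) (h' : {p, q, r} ∉ addedTriples T) (hxq : x ≠ q)
    (hx : 3 ≤ #x.1) (hxp : 3 ≤ #(x.1 ∆ p.1)) : x ∈ paschPoints (CameronSTS T) p q := by
  obtain ⟨hpq, hr⟩ : p ≠ q ∧ p.1 ∆ q.1 = r.1 :=
    mem_sdTriples_iff.1 (mem_sdiff.1 ((mem_union.1 h).resolve_right h')).1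
  have hne : x ≠ p := by
    rintro rfl
    simp at hxp
  refine mem_paschPoints.2 ⟨⟨x.1 ∆ p.1, symmDiff_val_nonempty hne⟩,
    ⟨x.1 ∆ q.1, symmDiff_val_nonempty hxq⟩, r, ?_, ?_, ?_, h⟩
  · exact (mem_cameronSTS_iff_of_three_le_card hT.1 hx).2 ⟨hne, rfl⟩
  · exact (mem_cameronSTS_iff_of_three_le_card hT.1 hx).2 ⟨hxq, rfl⟩
  · refine (mem_cameronSTS_iff_of_three_le_card hT.1 hxp).2 ⟨fun heq => hpq (Subtype.ext ?_), ?_⟩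
    · exact symmDiff_right_injective x.1 (Subtype.mk.inj heq)
    · rw [← hr, symmDiff_symmDiff_symmDiff_cancel]

-- The four families on the left are disjoint because their members have at most `4`, between
-- `5` and `9`, at least `12`, and exactly `10` elements.
theorem card_filter_card_le_four_add_lt (hβ : 14 ≤ Fintype.card β) :
    #{x : Finset β | #x ≤ 4} + 2 * #{x : Finset β | #x ≤ 2} < Fintype.card (Finset β) := by
  obtain ⟨u, -, hu⟩ := exists_subset_card_eq (s := (univ : Finset β)) (n := 7)
    (by rw [card_univ]; omega)
  obtain ⟨v, -, hv⟩ := exists_subset_card_eq (s := (univ : Finset β)) (n := 10)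
    (by rw [card_univ]; omega)
  have hmid : #{x : Finset β | #x ≤ 2} ≤ #{x : Finset β | 5 ≤ #x ∧ #x ≤ 9} := by
    refine card_le_card_of_injOn (u ∆ ·) (fun x hx => ?_) (symmDiff_right_injective u).injOn
    have hx : #x ≤ 2 := (mem_filter.1 hx).2
    have h₁ := card_le_card_add_card_symmDiff u x
    have h₂ := card_le_card_add_card_symmDiff (u ∆ x) u
    rw [symmDiff_comm _ u, symmDiff_symmDiff_cancel_left] at h₂
    refine mem_filter.2 ⟨mem_univ _, ?_⟩
    dsimp only
    omega
  have hhigh : #{x : Finset β | #x ≤ 2} ≤ #{x : Finset β | 12 ≤ #x} := by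
    refine card_le_card_of_injOn compl (fun x hx => ?_) compl_injective.injOn
    have hx : #x ≤ 2 := (mem_filter.1 hx).2
    refine mem_filter.2 ⟨mem_univ _, ?_⟩
    rw [card_compl]
    omega
  have hten : 0 < #{x : Finset β | #x = 10} := card_pos.2 ⟨v, by simp [hv]⟩
  have hle := card_le_univ ((univ.filter fun x : Finset β => #x ≤ 4) ∪
    (univ.filter fun x : Finset β => 5 ≤ #x ∧ #x ≤ 9) ∪ (univ.filter fun x : Finset β => 12 ≤ #x) ∪
    univ.filter fun x : Finset β => #x = 10)
  rw [card_union_of_disjoint, card_union_of_disjoint, card_union_of_disjoint] at hle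
  · omega
  all_goals
    rw [disjoint_left]
    intro x hx hx'
    simp only [mem_union, mem_filter, mem_univ, true_and] at hx hx'
    omega

theorem card_paschPoints_lt_card_filter (hT : IsPSTS T) {p q r : NESet β}
    (h : {p, q, r} ∈ addedTriples T) :
    #(paschPoints (CameronSTS T) p q) < #{x : Finset β | #x ≤ 4} := by
  rw [← card_image_of_injective _ Subtype.val_injective]
  refine card_lt_card ((ssubset_iff_of_subset fun x hx => ?_).2 ⟨∅, by simp, fun hx => ?_⟩)
  · obtain ⟨y, hy, rfl⟩ := mem_image.1 hx
    simpa using card_le_four_of_mem_paschPoints hT h hy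
  · obtain ⟨y, -, hy⟩ := mem_image.1 hx
    exact y.2.ne_empty hy

theorem card_finset_le_card_paschPoints_add (hT : IsPSTS T) {p q r : NESet β}
    (h : {p, q, r} ∈ CameronSTS T) (h' : {p, q, r} ∉ addedTriples T) :
    Fintype.card (Finset β) ≤
      #(paschPoints (CameronSTS T) p q) + 2 * #{x : Finset β | #x ≤ 2} + 1 := by
  set P := (paschPoints (CameronSTS T) p q).image Subtype.val
  set B := univ.filter fun x : Finset β => #x ≤ 2 with hB
  have hcover : (univ : Finset (Finset β)) ⊆ P ∪ B ∪ B.image (p.1 ∆ ·) ∪ {q.1} := by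
    intro x _
    by_contra hx
    simp only [mem_union, mem_singleton, not_or] at hx
    obtain ⟨⟨⟨hxP, hxB⟩, hxp⟩, hxq⟩ := hx
    have hx : 3 ≤ #x := by simpa [hB, Nat.lt_iff_add_one_le] using hxB
    have hxp : 3 ≤ #(x ∆ p.1) := by
      by_contra! hlt
      refine hxp (mem_image.2 ⟨x ∆ p.1, by simpa [hB] using Nat.le_of_lt_succ hlt, ?_⟩)
      rw [symmDiff_comm x, symmDiff_symmDiff_cancel_left]
    refine hxP (mem_image.2 ⟨⟨x, card_pos.1 (by omega)⟩, ?_, rfl⟩)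
    exact mem_paschPoints_of_three_le_card hT h h' (fun e => hxq (congrArg Subtype.val e)) hx hxp
  have hle := card_le_card hcover
  rw [card_univ] at hle
  have h₁ := card_union_le (P ∪ B ∪ B.image (p.1 ∆ ·)) {q.1}
  have h₂ := card_union_le (P ∪ B) (B.image (p.1 ∆ ·))
  have h₃ := card_union_le P B
  have h₄ : #(B.image (p.1 ∆ ·)) ≤ #B := card_image_le
  have h₅ : #P ≤ #(paschPoints (CameronSTS T) p q) := card_image_le
  rw [card_singleton] at h₁
  omega

theorem IsAut.isAut_addedTriples (hT : IsPSTS T) (hβ : 14 ≤ Fintype.card β)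
    {G : Equiv.Perm (NESet β)} (hG : IsAut (CameronSTS T) G) : IsAut (addedTriples T) G := by
  refine isAut_of_triple_mem (fun t => card_of_mem_addedTriples hT.1) fun p q r _ h => ?_
  have hmem := (hG.triple_mem_iff p q r).1 (addedTriples_subset_cameronSTS h)
  by_contra hnot
  have hfew := card_paschPoints_lt_card_filter hT h
  have hmany := card_finset_le_card_paschPoints_add hT hmem hnot
  rw [hG.card_paschPoints] at hmany
  have := card_filter_card_le_four_add_lt hβ
  omega

end Pasch

section CameronAutomorphisms

/-- The action of the permutations of a set on its nonempty subsets. -/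
def imagePerm (β : Type*) : Equiv.Perm β →* Equiv.Perm (NESet β) where
  toFun g :=
    { toFun := fun p => ⟨p.1.image g, p.2.image g⟩
      invFun := fun p => ⟨p.1.image g.symm, p.2.image g.symm⟩
      left_inv := fun p => Subtype.ext (by simp [image_image])
      right_inv := fun p => Subtype.ext (by simp [image_image]) }
  map_one' := by
    ext1 p
    exact Subtype.ext (by simp)
  map_mul' g h := by
    ext1 p
    exact Subtype.ext (by simp [image_image])

variable {β : Type*} {T : Finset (Finset β)}

theorem imagePerm_apply_val (g : Equiv.Perm β) (p : NESet β) :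
    (imagePerm β g p).1 = p.1.image g := rfl

theorem imagePerm_apply_sEl (g : Equiv.Perm β) (a : β) : imagePerm β g (sEl a) = sEl (g a) :=
  Subtype.ext (by simp [imagePerm_apply_val])

theorem imagePerm_injective : Function.Injective (imagePerm β) := fun g h e =>
  Equiv.ext fun a => sEl_injective (by rw [← imagePerm_apply_sEl, e, imagePerm_apply_sEl])

variable [Fintype β]

theorem mem_addedTriples_of_triple_mem {a b c : β} (h : {a, b, c} ∈ T) :
    {sEl a, sEl b, sEl c} ∈ addedTriples T ∧ {sEl a, pEl a b, pEl a c} ∈ addedTriples T :=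
  ⟨mem_filter.2 ⟨mem_univ _, a, b, c, h, Or.inl rfl⟩,
    mem_filter.2 ⟨mem_univ _, a, b, c, h, Or.inr (Or.inl rfl)⟩⟩

theorem exists_eq_of_mem_addedTriples_of_ne_sEl {t : Finset (NESet β)} (ht : t ∈ addedTriples T)
    {p : NESet β} (hp : p ∈ t) (hs : ∀ a, p ≠ sEl a) :
    ∃ a b c, {a, b, c} ∈ T ∧ p = pEl a b ∧ t = {sEl a, pEl a b, pEl a c} := by
  obtain ⟨a, b, c, h, rfl | rfl | rfl | rfl⟩ := (mem_filter.1 ht).2 <;>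
    simp only [mem_insert, mem_singleton, hs, false_or, or_false] at hp
  · rcases hp with rfl | rfl
    · exact ⟨a, b, c, h, rfl, rfl⟩
    · exact ⟨a, c, b, by rwa [pair_comm c b], rfl, by rw [pair_comm (pEl a b)]⟩
  · rcases hp with rfl | rfl
    · exact ⟨b, a, c, by rwa [insert_comm], pEl_comm _ _, by rw [pEl_comm a b]⟩
    · exact ⟨b, c, a, by rwa [pair_comm, insert_comm], rfl,
        by rw [pEl_comm a b, pair_comm (pEl b a)]⟩
  · rcases hp with rfl | rfl
    · exact ⟨c, a, b, by rwa [insert_comm, pair_comm], pEl_comm _ _,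
        by rw [pEl_comm a c, pEl_comm b c]⟩
    · exact ⟨c, b, a, by rwa [pair_comm, insert_comm, pair_comm], pEl_comm _ _,
        by rw [pEl_comm a c, pEl_comm b c, pair_comm (pEl c a)]⟩

theorem exists_eq_sEl_of_three_le_degree (hT : IsPSTS T) {p : NESet β}
    (h : 3 ≤ degree (addedTriples T) p) : ∃ a, p = sEl a := by
  by_contra! hs
  obtain ⟨t, ht, hp⟩ := degree_pos_iff.1 (by omega : 0 < degree (addedTriples T) p)
  obtain ⟨x, y, z, hxyz, rfl, -⟩ := exists_eq_of_mem_addedTriples_of_ne_sEl ht hp hs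
  have hsub : ∀ t ∈ addedTriples T, pEl x y ∈ t →
      t ∈ ({{sEl x, pEl x y, pEl x z}, {sEl y, pEl y x, pEl y z}} : Finset _) := by
    intro t' ht' hp'
    obtain ⟨a, b, c, habc, hab, rfl⟩ := exists_eq_of_mem_addedTriples_of_ne_sEl ht' hp' hs
    have hab : ({x, y} : Finset β) = {a, b} := congrArg Subtype.val hab
    rw [← coe_inj, coe_pair, coe_pair, Set.pair_eq_pair_iff] at hab
    rcases hab with ⟨rfl, rfl⟩ | ⟨rfl, rfl⟩
    · simp [hT.eq_of_triple_mem habc hxyz]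
    · rw [insert_comm] at hxyz
      simp [hT.eq_of_triple_mem habc hxyz]
  exact (h.trans ((degree_le_card hsub).trans card_le_two)).not_gt (by norm_num)

theorem three_le_degree_addedTriples_sEl (hT : ∀ s ∈ T, #s = 3) {a : β} (h : 2 ≤ degree T a) :
    3 ≤ degree (addedTriples T) (sEl a) := by
  obtain ⟨s, hs, s', hs', hne⟩ := one_lt_card.1 h
  rw [mem_filter] at hs hs'
  obtain ⟨b, c, rfl⟩ := exists_eq_triple (hT s hs.1) hs.2
  obtain ⟨d, e, rfl⟩ := exists_eq_triple (hT s' hs'.1) hs'.2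
  obtain ⟨hab, hac, -⟩ := ne_of_card_triple (hT _ hs.1)
  have hsub : ∀ t ∈ ({{sEl a, sEl b, sEl c}, {sEl a, pEl a b, pEl a c},
      {sEl a, sEl d, sEl e}} : Finset _), t ∈ addedTriples T ∧ sEl a ∈ t := by
    simp [mem_addedTriples_of_triple_mem hs.1, mem_addedTriples_of_triple_mem hs'.1]
  refine (card_eq_three.2 ⟨_, _, _, ?_, ?_, ?_, rfl⟩).ge.trans (card_le_degree hsub)
  · intro h
    have : sEl b ∈ ({sEl a, pEl a b, pEl a c} : Finset (NESet β)) := h ▸ by simp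
    simp [sEl_injective.eq_iff, hab.symm, sEl_ne_pEl _ hab, sEl_ne_pEl _ hac] at this
  · intro h
    exact hne (image_injective sEl_injective (by simpa only [image_insert, image_singleton]))
  · intro h
    have : pEl a b ∈ ({sEl a, sEl d, sEl e} : Finset (NESet β)) := h ▸ by simp
    simp [(sEl_ne_pEl _ hab).symm] at this

theorem IsAut.exists_apply_sEl_eq (hT : IsPSTS T) (hdeg : ∀ a, 0 < degree T a)
    (htwo : ∀ t ∈ T, ∃ b ∈ t, ∃ c ∈ t, b ≠ c ∧ 2 ≤ degree T b ∧ 2 ≤ degree T c)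
    {G : Equiv.Perm (NESet β)} (hG : IsAut (addedTriples T) G) (a : β) :
    ∃ b, G (sEl a) = sEl b := by
  have of_two_le : ∀ b, 2 ≤ degree T b → ∃ b', G (sEl b) = sEl b' := fun b hb =>
    exists_eq_sEl_of_three_le_degree hT
      ((three_le_degree_addedTriples_sEl hT.1 hb).trans (hG.degree_eq _).ge)
  obtain ⟨t, ht, ha⟩ := degree_pos_iff.1 (hdeg a)
  obtain ⟨b, hb, c, hc, hbc, hdb, hdc⟩ := htwo t ht
  obtain ⟨b', hb'⟩ := of_two_le b hdb
  obtain ⟨c', hc'⟩ := of_two_le c hdc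
  by_contra! hn
  have hab : a ≠ b := fun h => hn b' (h ▸ hb')
  have hac : a ≠ c := fun h => hn c' (h ▸ hc')
  obtain ⟨d, -, -, rfl⟩ := exists_eq_triple_of_mem (hT.1 t ht) hb hc hbc
  obtain rfl : a = d := by simpa [hab, hac] using ha
  have hadd := (hG.triple_mem_iff _ _ _).1 (mem_addedTriples_of_triple_mem ht).1
  obtain ⟨x, y, z, hxyz, -, he⟩ :=
    exists_eq_of_mem_addedTriples_of_ne_sEl hadd (p := G (sEl a)) (by simp) hn
  obtain ⟨hxy, hxz, -⟩ := ne_of_card_triple (hT.1 _ hxyz)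
  have eq_x : ∀ w, sEl w ∈ ({sEl x, pEl x y, pEl x z} : Finset (NESet β)) → w = x := by
    simp [sEl_injective.eq_iff, sEl_ne_pEl _ hxy, sEl_ne_pEl _ hxz]
  rw [hb', hc'] at he
  have hbc' : b' = c' := (eq_x b' (he ▸ by simp)).trans (eq_x c' (he ▸ by simp)).symm
  exact hbc (sEl_injective (G.injective (by rw [hb', hc', hbc'])))

theorem sEl_triple_mem_cameronSTS_iff (hT : ∀ s ∈ T, #s = 3) {a b c : β} (hac : a ≠ c) :
    ({sEl a, sEl b, sEl c} : Finset (NESet β)) ∈ CameronSTS T ↔ {a, b, c} ∈ T := by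
  refine ⟨fun h => ?_, fun h =>
    addedTriples_subset_cameronSTS (mem_addedTriples_of_triple_mem h).1⟩
  obtain ⟨hab, -, hbc⟩ := ne_of_card_triple (card_of_mem_cameronSTS hT h)
  rw [sEl_injective.ne_iff] at hab hbc
  rw [mem_cameronSTS_iff hT] at h
  rcases h with ⟨-, h, -⟩ | ⟨s, hs, -, -, -, h⟩
  · have : a ∈ (sEl c).1 := h ▸ by simp [mem_symmDiff, hab]
    simp [hac] at this
  · convert hs
    rw [← h]
    ext x
    grind [sEl_val, mem_symmDiff]

theorem IsAut.isAut_imagePerm (hT : ∀ s ∈ T, #s = 3) {g : Equiv.Perm β} (hg : IsAut T g) :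
    IsAut (CameronSTS T) (imagePerm β g) := by
  refine isAut_of_triple_mem (fun t => card_of_mem_cameronSTS hT) fun p q r _ h => ?_
  rw [mem_cameronSTS_iff hT] at h ⊢
  rcases h with ⟨hpq, hsum, hn⟩ | ⟨s, hs, hp, hq, hr, hsum⟩
  · refine Or.inl ⟨(imagePerm β g).injective.ne hpq,
      (image_symmDiff _ _ g.injective).symm.trans (congrArg _ hsum), ?_⟩
    rintro ⟨s, hs, hps⟩
    obtain ⟨s, rfl⟩ : ∃ s', s = s'.image g := ⟨s.image g.symm, by simp [image_image]⟩
    refine hn ⟨s, (hg s).2 hs, ?_⟩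
    simpa only [imagePerm_apply_val, image_ssubset_image g.injective] using hps
  · refine Or.inr ⟨s.image g, (hg s).1 hs, ?_⟩
    simp only [imagePerm_apply_val, image_ssubset_image g.injective,
      ← image_symmDiff _ _ g.injective, hsum]
    exact ⟨hp, hq, hr, trivial⟩

theorem insert_triple_mem_cameronSTS (hT : ∀ s ∈ T, #s = 3) {p q : NESet β} {x : β}
    (hx : x ∉ p.1) (hq : q.1 = insert x p.1) (hp : 2 ≤ #p.1) :
    {p, sEl x, q} ∈ CameronSTS T := by
  refine (mem_cameronSTS_iff hT).2 (Or.inl ⟨?_, ?_, ?_⟩)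
  · rintro rfl
    simp at hx
  · ext y
    grind [sEl_val, mem_symmDiff]
  · rintro ⟨s, hs, -, -, hqs⟩
    have := card_lt_card hqs
    rw [hT s hs, hq, card_insert_of_notMem hx] at this
    omega

theorem IsAut.apply_pEl_eq (hT : IsPSTS T) {G : Equiv.Perm (NESet β)}
    (hG : IsAut (CameronSTS T) G) (h : ∀ a, G (sEl a) = sEl a) {a b d : β} (hab : a ≠ b)
    (hda : d ≠ a) (hdb : d ≠ b) (hd : ∀ t ∈ T, a ∈ t → d ∉ t) : G (pEl a b) = pEl a b := by
  have line_mem : {sEl a, sEl d, pEl a d} ∈ CameronSTS T := by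
    refine (mem_cameronSTS_iff hT.1).2 (Or.inl ⟨sEl_injective.ne hda.symm, ?_, ?_⟩)
    · ext x
      grind [sEl_val, pEl_val, mem_symmDiff]
    · rintro ⟨s, hs, ha, hd', -⟩
      exact hd s hs (ha.1 (by simp)) (hd'.1 (by simp))
  have hU := (isSTS_cameronSTS hT).isPSTS
  have pair_fixed := hG.apply_eq_of_triple_mem hU line_mem (h a) (h d)
  let abd : NESet β := ⟨{a, b, d}, by simp⟩
  have triple_fixed : G abd = abd :=
    hG.apply_eq_of_triple_mem hU (a := pEl a d) (insert_triple_mem_cameronSTS hT.1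
      (by simp [hab.symm, hdb.symm]) (insert_comm a b {d}) (by simp [hda.symm])) pair_fixed (h b)
  have hmem : {pEl a b, sEl d, abd} ∈ CameronSTS T := insert_triple_mem_cameronSTS hT.1
    (by simp [hda, hdb]) (by rw [pEl_val, insert_comm, pair_comm d]) (by simp [hab])
  rw [insert_comm, pair_comm] at hmem
  exact hG.apply_eq_of_triple_mem hU hmem (h d) triple_fixed

theorem IsAut.eq_one_of_apply_sEl_eq (hT : IsPSTS T)
    (hcol : ∀ a b : β, a ≠ b → ∃ d, d ≠ a ∧ d ≠ b ∧ ∀ t ∈ T, a ∈ t → d ∉ t)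
    {G : Equiv.Perm (NESet β)} (hG : IsAut (CameronSTS T) G) (h : ∀ a, G (sEl a) = sEl a) :
    G = 1 := by
  ext1 ⟨s, hs⟩
  induction hs using Finset.Nonempty.cons_induction with
  | singleton a => exact h a
  | cons x s hx hs ih =>
    rcases eq_or_ne #s 1 with hcard | hcard
    · obtain ⟨y, rfl⟩ := card_eq_one.1 hcard
      have hxy : x ≠ y := by simpa using hx
      obtain ⟨d, hdx, hdy, hd⟩ := hcol x y hxy
      have heq : (⟨cons x {y} hx, cons_nonempty hx⟩ : NESet β) = pEl x y :=
        Subtype.ext (cons_eq_insert x {y} hx)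
      simpa only [heq, Equiv.Perm.one_apply] using hG.apply_pEl_eq hT h hxy hdx hdy hd
    · exact hG.apply_eq_of_triple_mem (isSTS_cameronSTS hT).isPSTS
        (insert_triple_mem_cameronSTS hT.1 (p := ⟨s, hs⟩) hx (cons_eq_insert x s hx)
          (by have := hs.card_pos; dsimp only; omega))
        ih (h x)

theorem nonempty_autGroup_cameronSTS_mulEquiv (hT : IsPSTS T) (hβ : 14 ≤ Fintype.card β)
    (hdeg : ∀ a, 0 < degree T a)
    (htwo : ∀ t ∈ T, ∃ b ∈ t, ∃ c ∈ t, b ≠ c ∧ 2 ≤ degree T b ∧ 2 ≤ degree T c)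
    (hcol : ∀ a b : β, a ≠ b → ∃ d, d ≠ a ∧ d ≠ b ∧ ∀ t ∈ T, a ∈ t → d ∉ t) :
    Nonempty (autGroup (CameronSTS T) ≃* autGroup T) := by
  let φ : autGroup T →* autGroup (CameronSTS T) :=
    ((imagePerm β).comp (autGroup T).subtype).codRestrict _ fun g => g.2.isAut_imagePerm hT.1
  refine ⟨(MulEquiv.ofBijective φ ⟨fun g g' e => ?_, fun ⟨G, hG⟩ => ?_⟩).symm⟩
  · exact Subtype.ext (imagePerm_injective (congrArg Subtype.val e))
  choose f hf using (IsAut.isAut_addedTriples hT hβ hG).exists_apply_sEl_eq hT hdeg htwo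
  have hf_inj : Function.Injective f := fun a b e =>
    sEl_injective (G.injective (by rw [hf, hf, e]))
  let g : Equiv.Perm β := Equiv.ofBijective f (Finite.injective_iff_bijective.1 hf_inj)
  have hg : IsAut T g := by
    refine isAut_of_triple_mem hT.1 fun a b c hac h => ?_
    rwa [← sEl_triple_mem_cameronSTS_iff hT.1 hac, hG.triple_mem_iff, hf, hf, hf,
      sEl_triple_mem_cameronSTS_iff hT.1 (hf_inj.ne hac)] at h
  have hone : (imagePerm β g)⁻¹ * G = 1 := by
    refine IsAut.eq_one_of_apply_sEl_eq hT hcol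
      ((autGroup _).mul_mem ((autGroup _).inv_mem (hg.isAut_imagePerm hT.1)) hG) fun a => ?_
    rw [Equiv.Perm.mul_apply, hf, Equiv.Perm.inv_eq_iff_eq, imagePerm_apply_sEl]
    rfl
  exact ⟨⟨g, hg⟩, Subtype.ext (inv_mul_eq_one.1 hone)⟩

end CameronAutomorphisms

theorem nonempty_cycleGraph_iso {V : Type*} [Finite V] {G : SimpleGraph V} (hG : G.Connected)
    (h : ∀ v, (G.neighborSet v).ncard = 2) :
    ∃ n, Nonempty (SimpleGraph.cycleGraph (n + 3) ≃g G) := by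
  obtain ⟨v⟩ := hG.nonempty
  obtain ⟨c, hc, -⟩ :=
    SimpleGraph.IsCycles.exists_cycle_toSubgraph_verts_eq_connectedComponentSupp
      (fun v _ => h v) (SimpleGraph.ConnectedComponent.connectedComponentMk_mem (v := v))
      ((Set.ncard_pos (Set.toFinite _)).1 (by rw [h]; norm_num))
  obtain ⟨n, hn⟩ := Nat.exists_eq_add_of_le' hc.three_le_length
  obtain ⟨f⟩ := (SimpleGraph.cycleGraph_isContained_iff (by omega)).2 ⟨v, c, hc, hn⟩
  have himage (i) : f '' (SimpleGraph.cycleGraph (n + 3)).neighborSet i = G.neighborSet (f i) := by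
    refine Set.eq_of_subset_of_ncard_le (Set.image_subset_iff.2 fun j hj => f.toHom.map_adj hj) ?_
    rw [Set.ncard_image_of_injective (f := f) _ f.injective, h, ← SimpleGraph.coe_neighborFinset,
      Set.ncard_coe_finset, SimpleGraph.card_neighborFinset_eq_degree,
      SimpleGraph.cycleGraph_degree_three_le]
  have hrange {u w} (p : G.Walk u w) : w ∈ Set.range f → u ∈ Set.range f := by
    induction p with
    | nil => exact id
    | cons hadj _ ih =>
      intro hw
      obtain ⟨i, rfl⟩ := ih hw
      obtain ⟨j, -, hj⟩ := (himage i).ge hadj.symm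
      exact ⟨j, hj⟩
  have hsurj : Function.Surjective f := fun u =>
    hrange (hG.preconnected u (f 0)).some ⟨0, rfl⟩
  refine ⟨n, ⟨Equiv.ofBijective f ⟨f.injective, hsurj⟩,
    fun {i j} => ⟨fun hij => ?_, f.toHom.map_adj⟩⟩⟩
  obtain ⟨k, hk, hkj⟩ := (himage i).ge hij
  exact f.injective hkj ▸ hk

section CyclicPSTS

variable {β : Type*} {C : Finset (Finset β)}

theorem mem_ptsOf {x : β} : x ∈ ptsOf C ↔ ∃ t ∈ C, x ∈ t := by
  simp [ptsOf, mem_sup]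

theorem card_ptsOf_of_forall_mem {x : β} (hC : IsPSTS C) (hne : C.Nonempty)
    (hx : ∀ t ∈ C, x ∈ t) : #(ptsOf C) = 2 * #C + 1 := by
  have hpts : ptsOf C = insert x (C.biUnion fun t => t.erase x) := by
    ext y
    simp only [mem_ptsOf, mem_insert, mem_biUnion, mem_erase]
    constructor
    · rintro ⟨t, ht, hy⟩
      exact or_iff_not_imp_left.2 fun hyx => ⟨t, ht, hyx, hy⟩
    · rintro (rfl | ⟨t, ht, -, hy⟩)
      exacts [hne.imp fun t ht => ⟨ht, hx t ht⟩, ⟨t, ht, hy⟩]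
  have hdisj : (C : Set (Finset β)).PairwiseDisjoint fun t => t.erase x := by
    intro t ht s hs hts
    refine disjoint_left.2 fun y hy hy' => hts ?_
    rw [mem_erase] at hy hy'
    exact hC.2 x y hy.1.symm t ht s hs (hx t ht) hy.2 (hx s hs) hy'.2
  rw [hpts, card_insert_of_notMem (by simp), card_biUnion hdisj,
    sum_congr rfl fun t ht => by rw [card_erase_of_mem (hx t ht), hC.1 t ht], sum_const,
    smul_eq_mul, mul_comm]

-- Three triples of the cycle through a common point would be all of its triples, on seven points.
theorem IsCyclicPSTS.degree_le_two (hC : IsPSTS C) (hcyc : IsCyclicPSTS C)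
    (heven : Even #(ptsOf C)) (x : β) : degree C x ≤ 2 := by
  by_contra! hx
  obtain ⟨-, hnbr, hconn⟩ := hcyc
  let F := {t ∈ C | x ∈ t}
  have hFC : ∀ t ∈ F, t ∈ C := fun t ht => (mem_filter.1 ht).1
  have hnbr_eq {t} (ht : t ∈ F) : F.erase t = {s ∈ C | s ≠ t ∧ (s ∩ t).Nonempty} := by
    refine eq_of_subset_of_card_le (fun s hs => ?_) ?_
    · rw [mem_erase, mem_filter] at hs
      exact mem_filter.2 ⟨hs.2.1, hs.1, x, mem_inter.2 ⟨hs.2.2, (mem_filter.1 ht).2⟩⟩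
    · rw [card_erase_of_mem ht, hnbr t (hFC t ht)]
      exact Nat.le_sub_one_of_lt hx
  obtain ⟨t₀, ht₀⟩ : F.Nonempty := card_pos.1 (pos_of_gt hx)
  have hmemF {t} (ht : t ∈ C) : t ∈ F := by
    induction hconn t₀ (hFC t₀ ht₀) t ht with
    | refl => exact ht₀
    | tail _ hadj ih =>
      obtain ⟨hs, ht, hne, hmeet⟩ := hadj
      refine mem_of_mem_erase ((hnbr_eq (ih hs)).ge (mem_filter.2 ⟨ht, hne.symm, ?_⟩))
      rwa [inter_comm]
  have hcard : #C = 3 := by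
    have := hnbr t₀ (hFC t₀ ht₀)
    rw [← hnbr_eq ht₀, card_erase_of_mem ht₀] at this
    rw [← (Subset.antisymm hFC fun t => hmemF : F = C)]
    omega
  have hpts := card_ptsOf_of_forall_mem hC ⟨t₀, hFC t₀ ht₀⟩ fun t ht => (mem_filter.1 (hmemF ht)).2
  rw [hpts, hcard] at heven
  exact absurd heven (by decide)

/-- The graph on the triples of a triple system, two triples being adjacent when they meet. -/
def meetGraph (C : Finset (Finset β)) : SimpleGraph C where
  Adj s t := s ≠ t ∧ (s.1 ∩ t.1).Nonempty
  symm := ⟨fun s t h => ⟨h.1.symm, inter_comm s.1 t.1 ▸ h.2⟩⟩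
  loopless := ⟨fun _ h => h.1 rfl⟩

theorem IsCyclicPSTS.exists_meetGraph_iso (h : IsCyclicPSTS C) :
    ∃ n, Nonempty (SimpleGraph.cycleGraph (n + 3) ≃g meetGraph C) := by
  have : Nonempty C := (card_pos.1 (by have := h.1; omega)).to_subtype
  obtain ⟨-, hnbr, hconn⟩ := h
  refine nonempty_cycleGraph_iso ⟨fun s t => ?_⟩ fun t => ?_
  · have hreach {u} (hu : Relation.ReflTransGen (TriAdj C) s u) :
        ∀ hu' : u ∈ C, (meetGraph C).Reachable s ⟨u, hu'⟩ := by
      induction hu with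
      | refl => exact fun _ => .rfl
      | tail _ hadj ih =>
        exact fun hv => (ih hadj.1).trans (SimpleGraph.Adj.reachable
          ⟨fun h => hadj.2.2.1 (congrArg Subtype.val h), hadj.2.2.2⟩)
    exact hreach (hconn s s.2 t t.2) t.2
  · have himage : Subtype.val '' (meetGraph C).neighborSet t =
        ({s ∈ C | s ≠ t ∧ (s ∩ t).Nonempty} : Finset (Finset β)) := by
      ext s
      simp only [Set.mem_image, SimpleGraph.mem_neighborSet, meetGraph, coe_filter,
        Set.mem_ofPred_eq, inter_comm s]
      constructor
      · rintro ⟨s, ⟨hts, hmeet⟩, rfl⟩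
        exact ⟨s.2, fun h => hts (Subtype.ext h.symm), hmeet⟩
      · rintro ⟨hs, hst, hmeet⟩
        exact ⟨⟨s, hs⟩, ⟨fun h => hst (congrArg Subtype.val h).symm, hmeet⟩, rfl⟩
    rw [← Set.ncard_image_of_injective _ Subtype.val_injective, himage, Set.ncard_coe_finset,
      hnbr t t.2]

/-- The triples `{p i, p (i + 1), w i}`, for `i ∈ ZMod m`, are pairwise distinct, are the triples
of `C`, and meet only in the points `p i`: the standard form of a cyclic PSTS. -/
structure IsTripleCycle {m : ℕ} (C : Finset (Finset β)) (p w : ZMod m → β) : Prop where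
  p_injective : Function.Injective p
  w_injective : Function.Injective w
  p_ne_w : ∀ i j, p i ≠ w j
  mem_iff : ∀ {s}, s ∈ C ↔ ∃ i, s = {p i, p (i + 1), w i}

theorem zmod_natCast_ne_zero {m k : ℕ} (hk : 0 < k) (hkm : k < m) : ((k : ℕ) : ZMod m) ≠ 0 := by
  rw [Ne, ZMod.natCast_eq_zero_iff]
  exact Nat.not_dvd_of_pos_of_lt hk hkm

theorem zmod_one_ne_zero {m : ℕ} (hm : 3 ≤ m) : (1 : ZMod m) ≠ 0 :=
  mod_cast zmod_natCast_ne_zero one_pos (by omega)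

theorem zmod_two_ne_zero {m : ℕ} (hm : 3 ≤ m) : (2 : ZMod m) ≠ 0 :=
  mod_cast zmod_natCast_ne_zero two_pos hm

theorem IsCyclicPSTS.exists_enumeration (hcyc : IsCyclicPSTS C) :
    ∃ m, 3 ≤ m ∧ ∃ t : ZMod m → Finset β, Function.Injective t ∧ (∀ s, s ∈ C ↔ ∃ i, t i = s) ∧
      ∀ i j, i ≠ j → ((t i ∩ t j).Nonempty ↔ i = j + 1 ∨ j = i + 1) := by
  obtain ⟨n, ⟨e⟩⟩ := hcyc.exists_meetGraph_iso
  have hinj : Function.Injective fun i : ZMod (n + 3) => (e i).1 :=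
    Subtype.val_injective.comp e.injective
  refine ⟨n + 3, by omega, fun i => e i, hinj, fun s => ⟨fun hs => ?_, ?_⟩, fun i j hij => ?_⟩
  · obtain ⟨i, hi⟩ := e.surjective ⟨s, hs⟩
    exact ⟨i, congrArg Subtype.val hi⟩
  · rintro ⟨i, rfl⟩
    exact (e i).2
  · have hadj : (meetGraph C).Adj (e i) (e j) ↔ i - j = 1 ∨ j - i = 1 := e.map_adj_iff
    rw [sub_eq_iff_eq_add', sub_eq_iff_eq_add'] at hadj
    exact (and_iff_right (e.injective.ne hij)).symm.trans hadj

theorem exists_injective_mem_mem_succ {m : ℕ} (hm : 3 ≤ m) (hdeg : ∀ x, degree C x ≤ 2)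
    {t : ZMod m → Finset β} (ht_inj : Function.Injective t) (ht : ∀ i, t i ∈ C)
    (hmeet : ∀ i, (t (i - 1) ∩ t i).Nonempty) :
    ∃ p : ZMod m → β, Function.Injective p ∧ ∀ i, p i ∈ t i ∧ p (i + 1) ∈ t i := by
  have h1 := zmod_one_ne_zero hm
  have h2 := zmod_two_ne_zero hm
  choose p hp using hmeet
  simp only [mem_inter] at hp
  have hp_iff {i j} (hj : p i ∈ t j) : j = i ∨ j = i - 1 := by
    by_contra! hne
    have hcard : #{t j, t i, t (i - 1)} ≤ 2 :=
      (card_le_degree (y := p i) (by simp [ht, hj, hp])).trans (hdeg _)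
    rw [card_eq_three.2 ⟨_, _, _, ht_inj.ne hne.1, ht_inj.ne hne.2,
      ht_inj.ne fun h => h1 (by linear_combination h), rfl⟩] at hcard
    omega
  refine ⟨p, fun i j hij => ?_, fun i => ⟨(hp i).2, by simpa using (hp (i + 1)).1⟩⟩
  rcases hp_iff (hij ▸ (hp j).2 : p i ∈ t j) with hj | hj
  · exact hj.symm
  · rcases hp_iff (hij ▸ (hp j).1 : p i ∈ t (j - 1)) with hj' | hj'
    · exact absurd (by linear_combination hj - hj') h2
    · exact absurd (by linear_combination hj - hj') h1

theorem exists_isTripleCycle {m : ℕ} (hm : 3 ≤ m) (hC : IsPSTS C) (hdeg : ∀ x, degree C x ≤ 2)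
    {t : ZMod m → Finset β} (ht_inj : Function.Injective t) (ht : ∀ s, s ∈ C ↔ ∃ i, t i = s)
    (hmeet : ∀ i j, i ≠ j → ((t i ∩ t j).Nonempty ↔ i = j + 1 ∨ j = i + 1)) :
    ∃ p w : ZMod m → β, IsTripleCycle C p w := by
  have h1 := zmod_one_ne_zero hm
  have htC i : t i ∈ C := (ht _).2 ⟨i, rfl⟩
  obtain ⟨p, hp_inj, hp⟩ := exists_injective_mem_mem_succ hm hdeg ht_inj htC fun i =>
    (hmeet _ _ fun h => h1 (by linear_combination -h)).2 (Or.inr (sub_add_cancel i 1).symm)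
  choose w hw_ne hw_ne_succ hw using fun i =>
    exists_eq_triple_of_mem (hC.1 _ (htC i)) (hp i).1 (hp i).2 (hp_inj.ne (left_ne_add.2 h1))
  have hw_mem i : w i ∈ t i := by simp [hw]
  have hw_iff {i j} (hj : w i ∈ t j) : i = j := by
    by_contra hij
    have hcommon {x : β} (hxi : x ∈ t i) (hxj : x ∈ t j) : w i = x := by
      by_contra hne
      exact hij (ht_inj (hC.2 _ _ hne _ (htC i) _ (htC j) (hw_mem i) hxi hj hxj))
    rcases (hmeet i j hij).1 ⟨_, mem_inter.2 ⟨hw_mem i, hj⟩⟩ with rfl | rfl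
    · exact hw_ne _ (hcommon (hp _).1 (hp j).2)
    · exact hw_ne_succ _ (hcommon (hp i).2 (hp _).1)
  refine ⟨p, w, hp_inj, fun i j hij => hw_iff (hij ▸ hw_mem j), fun i j hij => ?_, fun {s} => ?_⟩
  · have hi : j = i := hw_iff (hij ▸ (hp i).1)
    have hi' : j = i - 1 := hw_iff (hij ▸ by simpa using (hp (i - 1)).2)
    exact h1 (by linear_combination hi' - hi)
  · simp only [ht, eq_comm (a := s), ← hw]

namespace IsTripleCycle

variable {m : ℕ} {p w : ZMod m → β}

theorem mem_ptsOf (h : IsTripleCycle C p w) {x : β} :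
    x ∈ ptsOf C ↔ (∃ i, p i = x) ∨ ∃ i, w i = x := by
  rw [_root_.mem_ptsOf]
  constructor
  · rintro ⟨s, hs, hx⟩
    obtain ⟨i, rfl⟩ := h.mem_iff.1 hs
    simp only [mem_insert, mem_singleton] at hx
    rcases hx with rfl | rfl | rfl
    exacts [Or.inl ⟨_, rfl⟩, Or.inl ⟨_, rfl⟩, Or.inr ⟨_, rfl⟩]
  · rintro (⟨i, rfl⟩ | ⟨i, rfl⟩) <;> exact ⟨_, h.mem_iff.2 ⟨i, rfl⟩, by simp⟩

theorem card_ptsOf [NeZero m] (h : IsTripleCycle C p w) : #(ptsOf C) = 2 * m := by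
  have hpts : ptsOf C = univ.image p ∪ univ.image w := by
    ext x
    simp [h.mem_ptsOf]
  have hdisj : Disjoint (univ.image p) (univ.image w) := by
    simp only [disjoint_left, mem_image, mem_univ, true_and, not_exists]
    rintro _ ⟨i, rfl⟩ j hj
    exact h.p_ne_w i j hj.symm
  rw [hpts, card_union_of_disjoint hdisj, card_image_of_injective _ h.p_injective,
    card_image_of_injective _ h.w_injective, card_univ, ZMod.card, two_mul]

theorem degree_w (h : IsTripleCycle C p w) (i : ZMod m) : degree C (w i) = 1 := by
  refine card_eq_one.2 ⟨{p i, p (i + 1), w i}, ?_⟩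
  ext s
  simp only [mem_filter, mem_singleton, h.mem_iff]
  constructor
  · rintro ⟨⟨j, rfl⟩, hi⟩
    simp only [mem_insert, mem_singleton, (h.p_ne_w _ _).symm, false_or] at hi
    rw [h.w_injective hi]
  · rintro rfl
    exact ⟨⟨i, rfl⟩, by simp⟩

theorem translate (h : IsTripleCycle C p w) (a : ZMod m) :
    IsTripleCycle C (fun i => p (a + i)) fun i => w (a + i) where
  p_injective := h.p_injective.comp (add_right_injective a)
  w_injective := h.w_injective.comp (add_right_injective a)
  p_ne_w _ _ := h.p_ne_w _ _
  mem_iff {s} := by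
    rw [h.mem_iff, ← (Equiv.addLeft a).exists_congr_right]
    simp only [Equiv.coe_addLeft, add_assoc]

theorem reflect (h : IsTripleCycle C p w) (a : ZMod m) :
    IsTripleCycle C (fun i => p (a - i)) fun i => w (a - 1 - i) where
  p_injective := h.p_injective.comp sub_right_injective
  w_injective := h.w_injective.comp sub_right_injective
  p_ne_w _ _ := h.p_ne_w _ _
  mem_iff {s} := by
    rw [h.mem_iff, ← (Equiv.subLeft (a - 1)).exists_congr_right]
    refine exists_congr fun i => ?_
    have hi : a - 1 - i + 1 = a - i := by ring
    rw [insert_comm, Equiv.subLeft_apply, hi, ← sub_sub, sub_right_comm a 1 i]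

theorem exists_apply_zero_one (h : IsTripleCycle C p w) {s : Finset β} (hs : s ∈ C) {z z' : β}
    (hz : z ∈ s) (hz' : z' ∈ s) (hne : z ≠ z') (hd : 2 ≤ degree C z) (hd' : 2 ≤ degree C z') :
    ∃ p w : ZMod m → β, IsTripleCycle C p w ∧ p 0 = z ∧ p 1 = z' := by
  have hne_w {x : β} (hx : 2 ≤ degree C x) (i) : x ≠ w i := by
    rintro rfl
    rw [h.degree_w] at hx
    omega
  obtain ⟨a, rfl⟩ := h.mem_iff.1 hs
  simp only [mem_insert, mem_singleton, hne_w hd, hne_w hd', or_false] at hz hz'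
  rcases hz with rfl | rfl <;> rcases hz' with rfl | rfl
  · exact absurd rfl hne
  · exact ⟨_, _, h.translate a, by simp⟩
  · exact ⟨_, _, h.reflect (a + 1), by simp⟩
  · exact absurd rfl hne

end IsTripleCycle

theorem IsCyclicPSTS.exists_isTripleCycle {m : ℕ} (hC : IsPSTS C) (hcyc : IsCyclicPSTS C)
    (hm : #(ptsOf C) = 2 * m) {s : Finset β} (hs : s ∈ C) {z z' : β} (hz : z ∈ s) (hz' : z' ∈ s)
    (hne : z ≠ z') (hd : 2 ≤ degree C z) (hd' : 2 ≤ degree C z') :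
    3 ≤ m ∧ ∃ p w : ZMod m → β, IsTripleCycle C p w ∧ p 0 = z ∧ p 1 = z' := by
  obtain ⟨m', hm', t, ht_inj, ht, hmeet⟩ := hcyc.exists_enumeration
  have : NeZero m' := ⟨by omega⟩
  obtain ⟨p, w, h⟩ := _root_.exists_isTripleCycle hm' hC
    (hcyc.degree_le_two hC (hm ▸ even_two_mul m)) ht_inj ht hmeet
  obtain rfl : m = m' := by
    have := h.card_ptsOf
    omega
  exact ⟨hm', h.exists_apply_zero_one hs hz hz' hne hd hd'⟩

end CyclicPSTS

/-- Labels for the points of `Q(z)` whose two cycles of triples have lengths `m false` and `m true`: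
`corner b i` is the `i`-th point of cycle `b` lying in two of its triples, `mid b i` the third point
of its `i`-th triple, and `extra` the point `z'`. The labels `corner false 0` and `corner true 0`
both stand for `z`, and `corner b 1` stands for `z'_b`. -/
inductive QPoint (m : Bool → ℕ)
  | corner (b : Bool) (i : ZMod (m b))
  | mid (b : Bool) (i : ZMod (m b))
  | extra

namespace QPoint

variable {m : Bool → ℕ}

/-- The labels of the point `z` at which `Q(z)` is attached. -/
def IsRoot (j : QPoint m) : Prop := ∃ b, j = corner b 0

/-- The `i`-th triple of cycle `b`, in labels. -/
def cycleTriple (b : Bool) (i : ZMod (m b)) : Finset (QPoint m) :=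
  {corner b i, corner b (i + 1), mid b i}

/-- The triple joining the two cycles, in labels. -/
def joinTriple (m : Bool → ℕ) : Finset (QPoint m) := {corner false 1, corner true 1, extra}

/-- The triples of `Q(z)`, in labels. -/
def triples (m : Bool → ℕ) : Set (Finset (QPoint m)) :=
  {r | (∃ b i, r = cycleTriple b i) ∨ r = joinTriple m}

theorem cycleTriple_mem_triples (b : Bool) (i : ZMod (m b)) : cycleTriple b i ∈ triples m :=
  Or.inl ⟨b, i, rfl⟩

theorem joinTriple_mem_triples : joinTriple m ∈ triples m := Or.inr rfl

theorem exists_mem_triples {q : Finset (QPoint m) → Prop} :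
    (∃ r ∈ triples m, q r) ↔ (∃ b i, q (cycleTriple b i)) ∨ q (joinTriple m) := by
  constructor
  · rintro ⟨_, ⟨b, i, rfl⟩ | rfl, hq⟩
    exacts [Or.inl ⟨b, i, hq⟩, Or.inr hq]
  · rintro (⟨b, i, hq⟩ | hq)
    exacts [⟨_, cycleTriple_mem_triples b i, hq⟩, ⟨_, joinTriple_mem_triples, hq⟩]

theorem not_isRoot_mid (b : Bool) (i : ZMod (m b)) : ¬ (mid b i).IsRoot := by simp [IsRoot]

theorem not_isRoot_extra : ¬ (extra : QPoint m).IsRoot := by simp [IsRoot]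

theorem isRoot_corner {b : Bool} {i : ZMod (m b)} : (corner b i).IsRoot ↔ i = 0 := by
  constructor
  · rintro ⟨b', h⟩
    cases h
    rfl
  · rintro rfl
    exact ⟨b, rfl⟩

theorem corner_mem_joinTriple {b : Bool} {i : ZMod (m b)} :
    corner b i ∈ joinTriple m ↔ i = 1 := by
  cases b <;> simp [joinTriple]

theorem mem_triples_and_mid_mem {b : Bool} {i : ZMod (m b)} {r : Finset (QPoint m)} :
    r ∈ triples m ∧ mid b i ∈ r ↔ r = cycleTriple b i := by
  constructor
  · rintro ⟨⟨b', i', rfl⟩ | rfl, h⟩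
    · obtain ⟨rfl, h⟩ : b = b' ∧ i ≍ i' := by simpa [cycleTriple] using h
      rw [eq_of_heq h]
    · simp [joinTriple] at h
  · rintro rfl
    exact ⟨cycleTriple_mem_triples b i, by simp [cycleTriple]⟩

theorem mem_triples_and_extra_mem {r : Finset (QPoint m)} :
    r ∈ triples m ∧ extra ∈ r ↔ r = joinTriple m := by
  constructor
  · rintro ⟨⟨b, i, rfl⟩ | rfl, h⟩
    · simp [cycleTriple] at h
    · rfl
  · rintro rfl
    exact ⟨joinTriple_mem_triples, by simp [joinTriple]⟩

theorem mem_triples_and_corner_mem {b : Bool} {i : ZMod (m b)} {r : Finset (QPoint m)} :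
    r ∈ triples m ∧ corner b i ∈ r ↔
      r = cycleTriple b i ∨ r = cycleTriple b (i - 1) ∨ i = 1 ∧ r = joinTriple m := by
  constructor
  · rintro ⟨⟨b', i', rfl⟩ | rfl, h⟩
    · simp only [cycleTriple, mem_insert, mem_singleton, corner.injEq, reduceCtorEq, or_false] at h
      obtain ⟨rfl, h⟩ | ⟨rfl, h⟩ := h
      · exact Or.inl (by rw [eq_of_heq h])
      · exact Or.inr (Or.inl (by rw [eq_of_heq h, add_sub_cancel_right]))
    · exact Or.inr (Or.inr ⟨corner_mem_joinTriple.1 h, rfl⟩)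
  · rintro (rfl | rfl | ⟨rfl, rfl⟩)
    exacts [⟨cycleTriple_mem_triples _ _, by simp [cycleTriple]⟩,
      ⟨cycleTriple_mem_triples _ _, by simp [cycleTriple]⟩,
      ⟨joinTriple_mem_triples, corner_mem_joinTriple.2 rfl⟩]

theorem cycleTriple_inj {b b' : Bool} {i : ZMod (m b)} {i' : ZMod (m b')} :
    cycleTriple b i = cycleTriple b' i' ↔ mid b i = mid b' i' := by
  constructor
  · intro h
    have : mid b i ∈ cycleTriple b' i' := h ▸ by simp [cycleTriple]
    simpa [cycleTriple] using this
  · intro h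
    cases h
    rfl

theorem cycleTriple_ne_joinTriple (b : Bool) (i : ZMod (m b)) :
    cycleTriple b i ≠ joinTriple m := by
  intro h
  have : extra ∈ cycleTriple b i := h ▸ by simp [joinTriple]
  simp [cycleTriple] at this

theorem exists_not_isRoot_mem {r : Finset (QPoint m)} (hr : r ∈ triples m) :
    ∃ j, ¬ j.IsRoot ∧ j ∈ r ∧ ∀ r' ∈ triples m, j ∈ r' → r' = r := by
  obtain ⟨b, i, rfl⟩ | rfl := hr
  · exact ⟨mid b i, not_isRoot_mid b i, by simp [cycleTriple],
      fun r' hr' hj => mem_triples_and_mid_mem.1 ⟨hr', hj⟩⟩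
  · exact ⟨extra, not_isRoot_extra, by simp [joinTriple],
      fun r' hr' hj => mem_triples_and_extra_mem.1 ⟨hr', hj⟩⟩

end QPoint

open QPoint

/-- `c` labels the points `P` of the partial system `Q` as a copy of `Q(z)` with cycles of lengths
`m false` and `m true`, the two labels of `z` being the only ones that are identified. -/
structure IsQLabeling {β : Type*} {m : Bool → ℕ} (Q : Finset (Finset β)) (P : Finset β) (z : β)
    (c : QPoint m → β) : Prop where
  three_le : ∀ b, 3 ≤ m b
  root : ∀ {j}, j.IsRoot → c j = z
  eq_of_apply_eq : ∀ {j j'}, c j = c j' → j = j' ∨ j.IsRoot ∧ j'.IsRoot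
  mem_pts : ∀ {y}, y ∈ P ↔ ∃ j, c j = y
  mem_iff : ∀ {s}, s ∈ Q ↔ ∃ r ∈ triples m, s = r.image c

section

variable {β : Type*}

theorem IsPSTS.mono {S T : Finset (Finset β)} (hT : IsPSTS T) (h : S ⊆ T) : IsPSTS S :=
  ⟨fun t ht => hT.1 t (h ht), fun p q hpq t₁ h₁ t₂ h₂ => hT.2 p q hpq t₁ (h h₁) t₂ (h h₂)⟩

theorem IsQ.isPSTS {n : ℕ} {T : Finset (Finset β)} {P : Finset β} {z : β} (h : IsQ n T P z) :
    IsPSTS T := by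
  obtain ⟨-, -, -, -, -, -, -, hT, -⟩ := h
  exact hT

theorem IsQ.card_pts {n : ℕ} {T : Finset (Finset β)} {P : Finset β} {z : β} (h : IsQ n T P z) :
    #P = 4 * n + 10 := by
  obtain ⟨C₁, C₂, z', -, -, -, -, -, -, -, hc₁, hc₂, hcap, -, -, -, -, -, -, hz', -, rfl⟩ := h
  rw [card_union_of_disjoint (disjoint_singleton_right.2 hz'), card_singleton]
  have := card_union_add_card_inter (ptsOf C₁) (ptsOf C₂)
  rw [hcap, card_singleton] at this
  omega

/-- The lengths `n + 2` and `n + 3` of the two cycles of triples of `Q(z)`. -/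
def cycleLength (n : ℕ) (b : Bool) : ℕ := bif b then n + 3 else n + 2

theorem cycleLength_injective (n : ℕ) : Function.Injective (cycleLength n) := by
  rintro (_ | _) (_ | _) <;> simp [cycleLength]

section

variable {m : Bool → ℕ} {C : Bool → Finset (Finset β)} {p w : ∀ b, ZMod (m b) → β} {z z' : β}

theorem eq_or_isRoot_of_isTripleCycle (h : ∀ b, IsTripleCycle (C b) (p b) (w b))
    (hz : ∀ b, p b 0 = z) (hcap : ptsOf (C false) ∩ ptsOf (C true) = {z})
    (hz' : ∀ b, z' ∉ ptsOf (C b)) {j j' : QPoint m}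
    (e : (j.rec p w z' : β) = j'.rec p w z') : j = j' ∨ j.IsRoot ∧ j'.IsRoot := by
  have hp b i : p b i ∈ ptsOf (C b) := (h b).mem_ptsOf.2 (Or.inl ⟨i, rfl⟩)
  have hw b i : w b i ∈ ptsOf (C b) := (h b).mem_ptsOf.2 (Or.inr ⟨i, rfl⟩)
  have hcap' {b b' y} (hbb : b ≠ b') (hy : y ∈ ptsOf (C b)) (hy' : y ∈ ptsOf (C b')) : y = z := by
    rw [← mem_singleton, ← hcap, mem_inter]
    cases b <;> cases b' <;> simp_all
  have hp_root {b i} (e : p b i = z) : (corner b i : QPoint m).IsRoot :=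
    isRoot_corner.2 ((h b).p_injective (e.trans (hz b).symm))
  have hw_ne b i : w b i ≠ z := fun e => (h b).p_ne_w 0 i ((hz b).trans e.symm)
  have hpw b i b' i' : p b i ≠ w b' i' := by
    intro e
    obtain rfl | hbb := eq_or_ne b b'
    · exact (h b).p_ne_w _ _ e
    · exact hw_ne _ _ (hcap' hbb (e ▸ hp b i) (hw b' i'))
  obtain ⟨b, i⟩ | ⟨b, i⟩ | _ := j <;> obtain ⟨b', i'⟩ | ⟨b', i'⟩ | _ := j' <;> dsimp only at e
  · obtain rfl | hbb := eq_or_ne b b'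
    · exact Or.inl (congrArg _ ((h b).p_injective e))
    · have hi := hcap' hbb (hp b i) (e ▸ hp b' i')
      exact Or.inr ⟨hp_root hi, hp_root (e.symm.trans hi)⟩
  · exact absurd e (hpw _ _ _ _)
  · exact absurd (e ▸ hp b i) (hz' b)
  · exact absurd e.symm (hpw _ _ _ _)
  · obtain rfl | hbb := eq_or_ne b b'
    · exact Or.inl (congrArg _ ((h b).w_injective e))
    · exact absurd (hcap' hbb (hw b i) (e ▸ hw b' i')) (hw_ne b i)
  · exact absurd (e ▸ hw b i) (hz' b)
  · exact absurd (e ▸ hp b' i') (hz' b')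
  · exact absurd (e ▸ hw b' i') (hz' b')
  · exact Or.inl rfl

theorem isQLabeling_of_isTripleCycle (hm : ∀ b, 3 ≤ m b)
    (h : ∀ b, IsTripleCycle (C b) (p b) (w b)) (hz : ∀ b, p b 0 = z)
    (hcap : ptsOf (C false) ∩ ptsOf (C true) = {z}) (hz' : ∀ b, z' ∉ ptsOf (C b)) :
    IsQLabeling (C false ∪ C true ∪ {{p false 1, z', p true 1}})
      (ptsOf (C false) ∪ ptsOf (C true) ∪ {z'}) z
      (fun j : QPoint m => j.rec p w z') where
  three_le := hm
  root := by
    rintro _ ⟨b, rfl⟩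
    exact hz b
  eq_of_apply_eq := eq_or_isRoot_of_isTripleCycle h hz hcap hz'
  mem_pts {y} := by
    have hex : (∃ j : QPoint m, (j.rec p w z' : β) = y) ↔
        (∃ b i, p b i = y) ∨ (∃ b i, w b i = y) ∨ z' = y := by
      constructor
      · rintro ⟨⟨b, i⟩ | ⟨b, i⟩ | _, e⟩
        exacts [Or.inl ⟨b, i, e⟩, Or.inr (Or.inl ⟨b, i, e⟩), Or.inr (Or.inr e)]
      · rintro (⟨b, i, e⟩ | ⟨b, i, e⟩ | e)
        exacts [⟨corner b i, e⟩, ⟨mid b i, e⟩, ⟨extra, e⟩]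
    rw [hex, mem_union, mem_union, mem_singleton, (h _).mem_ptsOf, (h _).mem_ptsOf,
      or_or_or_comm, or_assoc, Bool.exists_bool, Bool.exists_bool, eq_comm (a := y)]
  mem_iff {s} := by
    simp only [exists_mem_triples, Bool.exists_bool, mem_union, mem_singleton, (h _).mem_iff,
      cycleTriple, joinTriple, image_insert, image_singleton, pair_comm z']

end

theorem IsQ.exists_isQLabeling {n : ℕ} {T : Finset (Finset β)} {P : Finset β} {z : β}
    (hQ : IsQ n T P z) : ∃ c : QPoint (cycleLength n) → β, IsQLabeling T P z c := by
  obtain ⟨C₁, C₂, z', z₁', z₂', z₁, z₂, hT, hC₁, hC₂, hc₁, hc₂, hcap, hd₁, hd₂, ht₁, hd₁', ht₂,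
    hd₂', hz', rfl, rfl⟩ := hQ
  have hC₁T : C₁ ⊆ C₁ ∪ C₂ ∪ {{z₁', z', z₂'}} := subset_union_left.trans subset_union_left
  have hC₂T : C₂ ⊆ C₁ ∪ C₂ ∪ {{z₁', z', z₂'}} := subset_union_right.trans subset_union_left
  obtain ⟨hm₁, p₁, w₁, h₁, hp₁, rfl⟩ := hC₁.exists_isTripleCycle (hT.mono hC₁T) (m := n + 2)
    (by omega) ht₁ (by simp) (by simp) (ne_of_card_triple (hT.1 _ (hC₁T ht₁))).1 hd₁.ge hd₁'.ge
  obtain ⟨hm₂, p₂, w₂, h₂, hp₂, rfl⟩ := hC₂.exists_isTripleCycle (hT.mono hC₂T) (m := n + 3)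
    (by omega) ht₂ (by simp) (by simp) (ne_of_card_triple (hT.1 _ (hC₂T ht₂))).1 hd₂.ge hd₂'.ge
  rw [mem_union, not_or] at hz'
  exact ⟨_, isQLabeling_of_isTripleCycle (m := cycleLength n) (C := fun b => bif b then C₂ else C₁)
    (p := Bool.rec p₁ p₂) (w := Bool.rec w₁ w₂) (Bool.rec hm₁ hm₂) (Bool.rec h₁ h₂)
    (Bool.rec hp₁ hp₂) hcap (Bool.rec hz'.1 hz'.2)⟩

end

namespace IsQLabeling

variable {β : Type*} {m : Bool → ℕ} {Q : Finset (Finset β)} {P : Finset β} {z : β}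
  {c : QPoint m → β}

theorem apply_mem (h : IsQLabeling Q P z c) (j : QPoint m) : c j ∈ P := h.mem_pts.2 ⟨j, rfl⟩

theorem apply_corner_zero (h : IsQLabeling Q P z c) (b : Bool) : c (corner b 0) = z :=
  h.root ⟨b, rfl⟩

theorem root_mem (h : IsQLabeling Q P z c) : z ∈ P :=
  h.apply_corner_zero true ▸ h.apply_mem _

theorem apply_eq_root_iff (h : IsQLabeling Q P z c) {j : QPoint m} : c j = z ↔ j.IsRoot := by
  refine ⟨fun hj => ?_, h.root⟩
  obtain rfl | hroot := h.eq_of_apply_eq (hj.trans (h.apply_corner_zero true).symm)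
  exacts [⟨true, rfl⟩, hroot.1]

theorem not_isRoot_corner_one (h : IsQLabeling Q P z c) (b : Bool) :
    ¬ (corner b 1 : QPoint m).IsRoot :=
  isRoot_corner.not.2 (zmod_one_ne_zero (h.three_le b))

theorem apply_mem_image (h : IsQLabeling Q P z c) {j : QPoint m} (hj : ¬ j.IsRoot)
    {r : Finset (QPoint m)} : c j ∈ r.image c ↔ j ∈ r := by
  refine ⟨fun hjr => ?_, mem_image_of_mem c⟩
  obtain ⟨j', hj', e⟩ := mem_image.1 hjr
  obtain rfl | hroot := h.eq_of_apply_eq e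
  exacts [hj', absurd hroot.2 hj]

theorem image_mem (h : IsQLabeling Q P z c) {r : Finset (QPoint m)} (hr : r ∈ triples m) :
    r.image c ∈ Q :=
  h.mem_iff.2 ⟨r, hr, rfl⟩

theorem subset_pts (h : IsQLabeling Q P z c) {s : Finset β} (hs : s ∈ Q) : s ⊆ P := by
  obtain ⟨r, -, rfl⟩ := h.mem_iff.1 hs
  exact image_subset_iff.2 fun j _ => h.apply_mem j

theorem injOn_image (h : IsQLabeling Q P z c) : (triples m).InjOn fun r => r.image c := by
  intro r hr r' hr' (e : r.image c = r'.image c)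
  obtain ⟨j, hj, hjr, huniq⟩ := exists_not_isRoot_mem hr
  exact (huniq r' hr' ((h.apply_mem_image hj).1 (e ▸ mem_image_of_mem c hjr))).symm

theorem corner_injective (h : IsQLabeling Q P z c) (b : Bool) :
    Function.Injective fun i => c (corner b i) := by
  intro i i' e
  rcases h.eq_of_apply_eq e with e | ⟨hi, hi'⟩
  · simpa using e
  · rw [isRoot_corner.1 hi, isRoot_corner.1 hi']

theorem degree_eq_card (h : IsQLabeling Q P z c) {j : QPoint m} (hj : ¬ j.IsRoot)
    {R : Finset (Finset (QPoint m))} (hR : ∀ r, r ∈ triples m ∧ j ∈ r ↔ r ∈ R) :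
    degree Q (c j) = #R := by
  have hfilter : {s ∈ Q | c j ∈ s} = R.image fun r => r.image c := by
    ext s
    simp only [mem_filter, mem_image, ← hR, h.mem_iff]
    constructor
    · rintro ⟨⟨r, hr, rfl⟩, hjr⟩
      exact ⟨r, ⟨hr, (h.apply_mem_image hj).1 hjr⟩, rfl⟩
    · rintro ⟨r, ⟨hr, hjr⟩, rfl⟩
      exact ⟨⟨r, hr, rfl⟩, mem_image_of_mem c hjr⟩
  rw [degree, hfilter, card_image_of_injOn]
  exact h.injOn_image.mono fun r hr => ((hR r).2 hr).1

theorem degree_mid (h : IsQLabeling Q P z c) (b : Bool) (i : ZMod (m b)) :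
    degree Q (c (mid b i)) = 1 :=
  (h.degree_eq_card (R := {cycleTriple b i}) (not_isRoot_mid b i) fun r => by
    rw [mem_triples_and_mid_mem, mem_singleton]).trans (card_singleton _)

theorem degree_extra (h : IsQLabeling Q P z c) : degree Q (c extra) = 1 :=
  (h.degree_eq_card (R := {joinTriple m}) not_isRoot_extra fun r => by
    rw [mem_triples_and_extra_mem, mem_singleton]).trans (card_singleton _)

theorem cycleTriple_ne_sub_one (h : IsQLabeling Q P z c) {b : Bool} (i : ZMod (m b)) :
    cycleTriple b i ≠ cycleTriple b (i - 1) := by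
  intro e
  have e : i = i - 1 := by simpa using cycleTriple_inj.1 e
  exact zmod_one_ne_zero (h.three_le b) (by linear_combination e)

theorem degree_corner (h : IsQLabeling Q P z c) {b : Bool} {i : ZMod (m b)} (hi : i ≠ 0)
    (hi' : i ≠ 1) : degree Q (c (corner b i)) = 2 :=
  (h.degree_eq_card (R := {cycleTriple b i, cycleTriple b (i - 1)}) (isRoot_corner.not.2 hi)
    fun r => by simp [mem_triples_and_corner_mem, hi']).trans
    (card_pair (h.cycleTriple_ne_sub_one i))

theorem degree_corner_one (h : IsQLabeling Q P z c) (b : Bool) :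
    degree Q (c (corner b 1)) = 3 :=
  (h.degree_eq_card (R := {cycleTriple b 1, cycleTriple b (1 - 1), joinTriple m})
    (h.not_isRoot_corner_one b)
    fun r => by simp only [mem_triples_and_corner_mem, true_and, mem_insert, mem_singleton]).trans
    (card_eq_three.2 ⟨_, _, _, h.cycleTriple_ne_sub_one 1, cycleTriple_ne_joinTriple _ _,
      cycleTriple_ne_joinTriple _ _, rfl⟩)

theorem degree_le_three (h : IsQLabeling Q P z c) {j : QPoint m} (hj : ¬ j.IsRoot) :
    degree Q (c j) ≤ 3 := by
  obtain ⟨b, i⟩ | ⟨b, i⟩ | _ := j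
  · obtain rfl | hi := eq_or_ne i 1
    · exact (h.degree_corner_one b).le
    · rw [h.degree_corner (isRoot_corner.not.1 hj) hi]
      norm_num
  · rw [h.degree_mid]
    norm_num
  · rw [h.degree_extra]
    norm_num

theorem four_le_degree_root (h : IsQLabeling Q P z c) : 4 ≤ degree Q z := by
  let r : Bool × Bool → Finset (QPoint m) := fun a => cycleTriple a.1 (bif a.2 then 0 else -1)
  have hr_mem a : r a ∈ triples m := cycleTriple_mem_triples _ _
  have hr_inj : Function.Injective r := by
    rintro ⟨b, a⟩ ⟨b', a'⟩ e
    obtain ⟨rfl : b = b', e⟩ : b = b' ∧ _ := by simpa using cycleTriple_inj.1 e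
    have h1 := zmod_one_ne_zero (h.three_le b)
    cases a <;> cases a' <;> simp_all
  have hinj : Function.Injective fun a => (r a).image c := fun a a' e =>
    hr_inj (h.injOn_image (hr_mem a) (hr_mem a') e)
  calc 4 = #(univ.image fun a => (r a).image c) := by
        rw [card_image_of_injective _ hinj]
        rfl
    _ ≤ degree Q z := card_le_degree fun s hs => ?_
  obtain ⟨⟨b, a⟩, -, rfl⟩ := mem_image.1 hs
  refine ⟨h.image_mem (hr_mem _), mem_image.2 ⟨corner b 0, ?_, h.apply_corner_zero b⟩⟩
  cases a <;> simp [r, cycleTriple]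

end IsQLabeling

/-- `T` is obtained from the partial system `S` by attaching to it, at the point `ι x` for each
point `x` of `S`, a partial system `Q x` on the points `P x`. -/
structure IsAttachment {α β : Type*} (S : Finset (Finset α)) (T : Finset (Finset β)) (ι : α → β)
    (P : α → Finset β) (Q : α → Finset (Finset β)) : Prop where
  isPSTS_base : IsPSTS S
  isPSTS_piece : ∀ x, IsPSTS (Q x)
  subset_pts : ∀ {x s}, s ∈ Q x → s ⊆ P x
  root_mem : ∀ x, ι x ∈ P x
  eq_of_mem : ∀ {x x' y}, y ∈ P x → y ∈ P x' → x = x'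
  exists_mem : ∀ y, ∃ x, y ∈ P x
  mem_iff : ∀ {s}, s ∈ T ↔ (∃ s' ∈ S, s = s'.image ι) ∨ ∃ x, s ∈ Q x

namespace IsAttachment

variable {α β : Type*} {S : Finset (Finset α)} {T : Finset (Finset β)} {ι : α → β}
  {P : α → Finset β} {Q : α → Finset (Finset β)}

theorem injective (h : IsAttachment S T ι P Q) : Function.Injective ι := fun x x' e =>
  h.eq_of_mem (h.root_mem x) (e ▸ h.root_mem x')

theorem piece_subset (h : IsAttachment S T ι P Q) (x : α) : Q x ⊆ T := fun _ hs =>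
  h.mem_iff.2 (Or.inr ⟨x, hs⟩)

theorem mem_piece_of_mem (h : IsAttachment S T ι P Q) {x : α} {y : β} {s : Finset β}
    (hs : s ∈ T) (hy : y ∈ P x) (hne : y ≠ ι x) (hys : y ∈ s) : s ∈ Q x := by
  rcases h.mem_iff.1 hs with ⟨s', -, rfl⟩ | ⟨x', hx'⟩
  · obtain ⟨x', -, rfl⟩ := mem_image.1 hys
    exact absurd (congrArg ι (h.eq_of_mem (h.root_mem x') hy)) hne
  · exact h.eq_of_mem (h.subset_pts hx' hys) hy ▸ hx'

theorem degree_eq (h : IsAttachment S T ι P Q) {x : α} {y : β} (hy : y ∈ P x) (hne : y ≠ ι x) :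
    degree T y = degree (Q x) y :=
  le_antisymm (degree_le_card fun _ hs hys =>
    mem_filter.2 ⟨h.mem_piece_of_mem hs hy hne hys, hys⟩) (degree_mono (h.piece_subset x) y)

theorem eq_of_mem_piece (h : IsAttachment S T ι P Q) {x a b : α} {s : Finset β} (hs : s ∈ Q x)
    (ha : ι a ∈ s) (hb : ι b ∈ s) : a = b :=
  (h.eq_of_mem (h.root_mem a) (h.subset_pts hs ha)).trans
    (h.eq_of_mem (h.root_mem b) (h.subset_pts hs hb)).symm

theorem isPSTS (h : IsAttachment S T ι P Q) : IsPSTS T := by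
  have hmixed {s' : Finset α} {x s} (hs : s ∈ Q x) {a b} (hab : a ≠ b) (ha : a ∈ s'.image ι)
      (hb : b ∈ s'.image ι) (has : a ∈ s) : b ∉ s := by
    obtain ⟨a, -, rfl⟩ := mem_image.1 ha
    obtain ⟨b, -, rfl⟩ := mem_image.1 hb
    exact fun hbs => hab (congrArg ι (h.eq_of_mem_piece hs has hbs))
  constructor
  · intro s hs
    rcases h.mem_iff.1 hs with ⟨s', hs', rfl⟩ | ⟨x, hx⟩
    · rw [card_image_of_injective _ h.injective, h.isPSTS_base.1 s' hs']
    · exact (h.isPSTS_piece x).1 s hx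
  · intro a b hab s₁ hs₁ s₂ hs₂ ha₁ hb₁ ha₂ hb₂
    rcases h.mem_iff.1 hs₁ with ⟨s₁', h₁, rfl⟩ | ⟨x₁, h₁⟩ <;>
      rcases h.mem_iff.1 hs₂ with ⟨s₂', h₂, rfl⟩ | ⟨x₂, h₂⟩
    · obtain ⟨a, ha, rfl⟩ := mem_image.1 ha₁
      obtain ⟨b, hb, rfl⟩ := mem_image.1 hb₁
      rw [h.injective.mem_finset_image] at ha₂ hb₂
      rw [h.isPSTS_base.2 a b (ne_of_apply_ne ι hab) s₁' h₁ s₂' h₂ ha hb ha₂ hb₂]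
    · exact absurd hb₂ (hmixed h₂ hab ha₁ hb₁ ha₂)
    · exact absurd hb₁ (hmixed h₁ hab ha₂ hb₂ ha₁)
    · obtain rfl := h.eq_of_mem (h.subset_pts h₁ ha₁) (h.subset_pts h₂ ha₂)
      exact (h.isPSTS_piece x₁).2 a b hab s₁ h₁ s₂ h₂ ha₁ hb₁ ha₂ hb₂

theorem image_mem_iff (h : IsAttachment S T ι P Q) {s : Finset α} (hs : 2 ≤ #s) :
    s.image ι ∈ T ↔ s ∈ S := by
  rw [h.mem_iff]
  refine ⟨?_, fun hs => Or.inl ⟨s, hs, rfl⟩⟩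
  rintro (⟨s', hs', e⟩ | ⟨x, hx⟩)
  · exact image_injective h.injective e ▸ hs'
  · obtain ⟨a, ha, b, hb, hab⟩ := one_lt_card.1 hs
    exact absurd (h.eq_of_mem_piece hx (mem_image_of_mem ι ha) (mem_image_of_mem ι hb)) hab

theorem exists_restrict [Finite α] (h : IsAttachment S T ι P Q) {g : Equiv.Perm β}
    (hg : IsAut T g) (hroot : ∀ x, ∃ x', g (ι x) = ι x') :
    ∃ k : Equiv.Perm α, IsAut S k ∧ ∀ x, g (ι x) = ι (k x) := by
  choose f hf using hroot
  have hf_inj : Function.Injective f := fun a b e =>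
    h.injective (g.injective ((hf a).trans (e ▸ (hf b).symm)))
  refine ⟨Equiv.ofBijective f (Finite.injective_iff_bijective.1 hf_inj),
    isAut_of_image_mem fun s hs => ?_, hf⟩
  have hs3 := h.isPSTS_base.1 s hs
  have himage : (s.image f).image ι = (s.image ι).image g := by
    simp only [image_image, Function.comp_def, hf]
  rw [Equiv.coe_ofBijective, ← h.image_mem_iff (by rw [card_image_of_injective _ hf_inj]; omega),
    himage, ← hg]
  exact (h.image_mem_iff (by omega)).2 hs

end IsAttachment

/-- An attachment whose pieces are copies of one and the same `Q(z)`, the piece at `x` being labeled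
by `c x`. -/
structure IsQAttachment {α β : Type*} {m : Bool → ℕ} (S : Finset (Finset α))
    (T : Finset (Finset β)) (ι : α → β) (P : α → Finset β) (Q : α → Finset (Finset β))
    (c : α → QPoint m → β) : Prop extends IsAttachment S T ι P Q where
  labeling : ∀ x, IsQLabeling (Q x) (P x) (ι x) (c x)

namespace IsQAttachment

variable {α β : Type*} {S : Finset (Finset α)} {T : Finset (Finset β)} {ι : α → β}
  {P : α → Finset β} {Q : α → Finset (Finset β)} {m : Bool → ℕ} {c : α → QPoint m → β}
  {g : Equiv.Perm β} {x : α}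

theorem exists_apply_eq (h : IsQAttachment S T ι P Q c) (y : β) : ∃ x j, c x j = y :=
  (h.exists_mem y).imp fun x hx => (h.labeling x).mem_pts.1 hx

theorem exists_extend (h : IsQAttachment S T ι P Q c) {k : Equiv.Perm α} (hk : IsAut S k) :
    ∃ g : Equiv.Perm β, IsAut T g ∧ ∀ x, g (ι x) = ι (k x) := by
  choose X J hXJ using h.exists_apply_eq
  let F (k : α → α) (y : β) : β := c (k (X y)) (J y)
  have hF k x j : F k (c x j) = c (k x) j := by
    have hmem := (h.labeling (X (c x j))).apply_mem (J (c x j))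
    rw [hXJ] at hmem
    have hX : X (c x j) = x := h.eq_of_mem hmem ((h.labeling x).apply_mem j)
    have hJ := hXJ (c x j)
    rw [hX] at hJ
    obtain e | hroot := (h.labeling x).eq_of_apply_eq hJ
    · simp only [F, hX, e]
    · simp only [F, hX, (h.labeling (k x)).root hroot.1, (h.labeling (k x)).root hroot.2]
  have hFF {k k' : α → α} (hkk : ∀ x, k (k' x) = x) y : F k (F k' y) = y :=
    (hF _ _ _).trans (by rw [hkk, hXJ])
  have hFι x : F k (ι x) = ι (k x) := by
    rw [← (h.labeling x).apply_corner_zero true, hF, (h.labeling _).apply_corner_zero]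
  refine ⟨⟨F k, F k.symm, hFF k.symm_apply_apply, hFF k.apply_symm_apply⟩,
    isAut_of_image_mem fun s hs => h.mem_iff.2 ?_, hFι⟩
  rw [Equiv.coe_fn_mk]
  rcases h.mem_iff.1 hs with ⟨s', hs', rfl⟩ | ⟨x, hx⟩
  · refine Or.inl ⟨s'.image k, (hk s').1 hs', ?_⟩
    simp only [image_image, Function.comp_def, hFι]
  · obtain ⟨r, hr, rfl⟩ := (h.labeling x).mem_iff.1 hx
    refine Or.inr ⟨k x, (h.labeling (k x)).mem_iff.2 ⟨r, hr, ?_⟩⟩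
    simp only [image_image, Function.comp_def, hF]

theorem degree_apply (h : IsQAttachment S T ι P Q c) {j : QPoint m} (hj : ¬ j.IsRoot) :
    degree T (c x j) = degree (Q x) (c x j) :=
  h.degree_eq ((h.labeling x).apply_mem j) ((h.labeling x).apply_eq_root_iff.not.2 hj)

theorem four_le_degree_root (h : IsQAttachment S T ι P Q c) (x : α) : 4 ≤ degree T (ι x) :=
  (h.labeling x).four_le_degree_root.trans (degree_mono (h.piece_subset x) _)

theorem exists_eq_root_or_degree_le_three (h : IsQAttachment S T ι P Q c) (y : β) :
    (∃ x, y = ι x) ∨ degree T y ≤ 3 := by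
  obtain ⟨x, j, rfl⟩ := h.exists_apply_eq y
  by_cases hj : j.IsRoot
  · exact Or.inl ⟨x, (h.labeling x).root hj⟩
  · exact Or.inr (h.degree_apply hj ▸ (h.labeling x).degree_le_three hj)

theorem exists_eq_corner_one (h : IsQAttachment S T ι P Q c) {j : QPoint m}
    (hd : degree T (c x j) = 3) : ∃ b, j = corner b 1 := by
  have hj : ¬ j.IsRoot := by
    intro hj
    have := h.four_le_degree_root x
    rw [← (h.labeling x).root hj] at this
    omega
  rw [h.degree_apply hj] at hd
  obtain ⟨b, i⟩ | ⟨b, i⟩ | _ := j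
  · obtain rfl | hi := eq_or_ne i 1
    · exact ⟨b, rfl⟩
    · rw [(h.labeling x).degree_corner (isRoot_corner.not.1 hj) hi] at hd
      omega
  · rw [(h.labeling x).degree_mid] at hd
    omega
  · rw [(h.labeling x).degree_extra] at hd
    omega

theorem two_le_degree_corner (h : IsQAttachment S T ι P Q c) (b : Bool) (i : ZMod (m b)) :
    2 ≤ degree T (c x (corner b i)) := by
  obtain rfl | hi := eq_or_ne i 0
  · have := h.four_le_degree_root x
    rw [(h.labeling x).apply_corner_zero]
    omega
  · rw [h.degree_apply (isRoot_corner.not.2 hi)]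
    obtain rfl | hi' := eq_or_ne i 1
    · rw [(h.labeling x).degree_corner_one]
      norm_num
    · rw [(h.labeling x).degree_corner hi hi']

theorem degree_corner_ne_three (h : IsQAttachment S T ι P Q c) {b : Bool} {i : ZMod (m b)}
    (hi : i ≠ 1) : degree T (c x (corner b i)) ≠ 3 := by
  intro hd
  obtain ⟨b', e⟩ := h.exists_eq_corner_one hd
  cases e
  exact hi rfl

theorem exists_mem_triples_of_mem (h : IsQAttachment S T ι P Q c) {j : QPoint m} (hj : ¬ j.IsRoot)
    {s : Finset β} (hs : s ∈ T) (hjs : c x j ∈ s) :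
    ∃ r, (r ∈ triples m ∧ j ∈ r) ∧ s = r.image (c x) := by
  obtain ⟨r, hr, rfl⟩ := (h.labeling x).mem_iff.1 <|
    h.mem_piece_of_mem hs ((h.labeling x).apply_mem j)
      ((h.labeling x).apply_eq_root_iff.not.2 hj) hjs
  exact ⟨r, ⟨hr, ((h.labeling x).apply_mem_image hj).1 hjs⟩, rfl⟩

theorem cycleTriple_mem (h : IsQAttachment S T ι P Q c) (x : α) (b : Bool) (i : ZMod (m b)) :
    {c x (corner b i), c x (corner b (i + 1)), c x (mid b i)} ∈ T := by
  simpa only [cycleTriple, image_insert, image_singleton] using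
    h.piece_subset x ((h.labeling x).image_mem (cycleTriple_mem_triples b i))

theorem joinTriple_mem (h : IsQAttachment S T ι P Q c) (x : α) :
    {c x (corner false 1), c x (corner true 1), c x extra} ∈ T := by
  simpa only [joinTriple, image_insert, image_singleton] using
    h.piece_subset x ((h.labeling x).image_mem joinTriple_mem_triples)

theorem exists_apply_corner_one_eq (h : IsQAttachment S T ι P Q c) (hg : IsAut T g)
    (hx : g (ι x) = ι x) (b : Bool) : ∃ b', g (c x (corner b 1)) = c x (corner b' 1) := by
  have hs := (hg.triple_mem_iff _ _ _).1 (h.cycleTriple_mem x b 0)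
  rw [(h.labeling x).apply_corner_zero, hx, zero_add] at hs
  obtain ⟨x', j, hj⟩ := h.exists_apply_eq (g (c x (corner b 1)))
  have hdeg : degree T (c x' j) = 3 := by
    rw [hj, hg.degree_eq, h.degree_apply ((h.labeling x).not_isRoot_corner_one b),
      (h.labeling x).degree_corner_one]
  obtain ⟨b', rfl⟩ := h.exists_eq_corner_one hdeg
  have hne : c x' (corner b' 1) ≠ ι x' :=
    (h.labeling x').apply_eq_root_iff.not.2 ((h.labeling x').not_isRoot_corner_one b')
  have hsQ := h.mem_piece_of_mem hs ((h.labeling x').apply_mem _) hne (by simp [hj])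
  obtain rfl := h.eq_of_mem (h.labeling x).root_mem ((h.labeling x').subset_pts hsQ (by simp))
  exact ⟨b', hj.symm⟩

theorem eq_corner_of_mem (h : IsQAttachment S T ι P Q c) {b : Bool} {i : ZMod (m b)} (hi : i ≠ 0)
    {s : Finset β} (hs : s ∈ T) (his : c x (corner b i) ∈ s) {y : β} (hys : y ∈ s)
    (hy : 2 ≤ degree T y) (hy' : degree T y ≠ 3) :
    y = c x (corner b (i - 1)) ∨ y = c x (corner b i) ∨ y = c x (corner b (i + 1)) := by
  have hmid b i : y ≠ c x (mid b i) := by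
    rintro rfl
    rw [h.degree_apply (not_isRoot_mid b i), (h.labeling x).degree_mid] at hy
    omega
  have hextra : y ≠ c x extra := by
    rintro rfl
    rw [h.degree_apply not_isRoot_extra, (h.labeling x).degree_extra] at hy
    omega
  have hone b : y ≠ c x (corner b 1) := by
    rintro rfl
    rw [h.degree_apply ((h.labeling x).not_isRoot_corner_one b),
      (h.labeling x).degree_corner_one] at hy'
    exact hy' rfl
  obtain ⟨r, hr, rfl⟩ := h.exists_mem_triples_of_mem (isRoot_corner.not.2 hi) hs his
  obtain rfl | rfl | ⟨rfl, rfl⟩ := mem_triples_and_corner_mem.1 hr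
  · simp only [cycleTriple, image_insert, image_singleton, mem_insert, mem_singleton, hmid,
      or_false] at hys
    exact Or.inr hys
  · simp only [cycleTriple, image_insert, image_singleton, mem_insert, mem_singleton, hmid,
      or_false, sub_add_cancel] at hys
    exact or_assoc.1 (Or.inl hys)
  · simp [joinTriple, hone, hextra] at hys

theorem apply_corner_add_one (h : IsQAttachment S T ι P Q c) (hg : IsAut T g) {b b' : Bool}
    {i : ZMod (m b)} {j : ZMod (m b')} (hi : i ≠ 0) (hj : j ≠ 0)
    (hpred : g (c x (corner b (i - 1))) = c x (corner b' (j - 1)))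
    (hcur : g (c x (corner b i)) = c x (corner b' j)) :
    g (c x (corner b (i + 1))) = c x (corner b' (j + 1)) := by
  have hs := (hg.triple_mem_iff _ _ _).1 (h.cycleTriple_mem x b i)
  have hi1 : i + 1 ≠ 1 := fun e => hi (by linear_combination e)
  rcases h.eq_corner_of_mem (x := x) hj hs (by simp [hcur])
    (y := g (c x (corner b (i + 1)))) (by simp)
    ((hg.degree_eq _).symm ▸ h.two_le_degree_corner b _)
    ((hg.degree_eq _).symm ▸ h.degree_corner_ne_three hi1) with e | e | e
  · have e := (h.labeling x).corner_injective b (g.injective (e.trans hpred.symm))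
    exact absurd (by linear_combination e) (zmod_two_ne_zero ((h.labeling x).three_le b))
  · have e := (h.labeling x).corner_injective b (g.injective (e.trans hcur.symm))
    exact absurd (by linear_combination e) (zmod_one_ne_zero ((h.labeling x).three_le b))
  · exact e

theorem apply_corner_natCast (h : IsQAttachment S T ι P Q c) (hg : IsAut T g) (hx : g (ι x) = ι x)
    {b b' : Bool} (h1 : g (c x (corner b 1)) = c x (corner b' 1)) {k : ℕ} (hk : k ≤ m b)
    (hk' : k ≤ m b') : g (c x (corner b k)) = c x (corner b' k) := by
  induction k using Nat.twoStepInduction with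
  | zero => simpa [(h.labeling x).apply_corner_zero] using hx
  | one => simpa using h1
  | more k ih₀ ih₁ =>
    have hstep := h.apply_corner_add_one hg (b := b) (b' := b') (i := (k + 1 : ℕ))
      (j := (k + 1 : ℕ)) (zmod_natCast_ne_zero k.succ_pos hk) (zmod_natCast_ne_zero k.succ_pos hk')
      (by simpa using ih₀ (by omega) (by omega)) (ih₁ (by omega) (by omega))
    exact_mod_cast hstep

theorem apply_corner_one (h : IsQAttachment S T ι P Q c) (hm : Function.Injective m)
    (hg : IsAut T g) (hx : g (ι x) = ι x) (b : Bool) : g (c x (corner b 1)) = c x (corner b 1) := by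
  obtain ⟨b', hb'⟩ := h.exists_apply_corner_one_eq hg hx b
  have hpos b : 0 < m b := zero_lt_three.trans_le ((h.labeling x).three_le b)
  obtain hlt | heq | hlt := lt_trichotomy (m b) (m b')
  · have e := h.apply_corner_natCast hg hx hb' le_rfl hlt.le
    rw [ZMod.natCast_self, (h.labeling x).apply_corner_zero, hx, eq_comm,
      (h.labeling x).apply_eq_root_iff, isRoot_corner] at e
    exact absurd e (zmod_natCast_ne_zero (hpos b) hlt)
  · rw [hb', hm heq]
  · have e := h.apply_corner_natCast hg hx hb' hlt.le le_rfl
    rw [ZMod.natCast_self, (h.labeling x).apply_corner_zero, ← hx, g.apply_eq_iff_eq,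
      (h.labeling x).apply_eq_root_iff, isRoot_corner] at e
    exact absurd e (zmod_natCast_ne_zero (hpos b') hlt)

theorem apply_corner (h : IsQAttachment S T ι P Q c) (hm : Function.Injective m) (hg : IsAut T g)
    (hx : g (ι x) = ι x) (b : Bool) (i : ZMod (m b)) : g (c x (corner b i)) = c x (corner b i) := by
  have : NeZero (m b) := ⟨(zero_lt_three.trans_le ((h.labeling x).three_le b)).ne'⟩
  have hi := i.val_lt.le
  simpa using h.apply_corner_natCast hg hx (h.apply_corner_one hm hg hx b) hi hi

theorem eq_one_of_apply_root_eq (h : IsQAttachment S T ι P Q c) (hm : Function.Injective m)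
    (hg : IsAut T g) (hι : ∀ x, g (ι x) = ι x) : g = 1 := by
  ext y
  obtain ⟨x, j, rfl⟩ := h.exists_apply_eq y
  have hcorner := h.apply_corner hm hg (hι x)
  obtain ⟨b, i⟩ | ⟨b, i⟩ | _ := j
  · exact hcorner b i
  · exact hg.apply_eq_of_triple_mem h.isPSTS (h.cycleTriple_mem x b i) (hcorner b _)
      (hcorner b _)
  · exact hg.apply_eq_of_triple_mem h.isPSTS (h.joinTriple_mem x) (hcorner false 1)
      (hcorner true 1)

theorem autRestrictIso [Finite α] (h : IsQAttachment S T ι P Q c) (hm : Function.Injective m) :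
    AutRestrictIso T S ι := by
  refine ⟨fun g hg => h.exists_restrict hg fun x => ?_, fun k hk => ?_⟩
  · refine (h.exists_eq_root_or_degree_le_three (g (ι x))).resolve_right fun hle => ?_
    have := h.four_le_degree_root x
    rw [hg.degree_eq] at hle
    omega
  · obtain ⟨g, hg, hgk⟩ := h.exists_extend hk
    refine ⟨g, ⟨hg, hgk⟩, fun g' ⟨hg', hgk'⟩ => ?_⟩
    have hone : g⁻¹ * g' = 1 := by
      refine h.eq_one_of_apply_root_eq hm
        ((autGroup T).mul_mem ((autGroup T).inv_mem hg) hg') fun x => ?_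
      rw [Equiv.Perm.mul_apply, hgk', Equiv.Perm.inv_eq_iff_eq, hgk]
    exact (inv_mul_eq_one.1 hone).symm

theorem degree_pos (h : IsQAttachment S T ι P Q c) (y : β) : 0 < degree T y := by
  rw [degree_pos_iff]
  obtain ⟨x, ⟨b, i⟩ | ⟨b, i⟩ | _, rfl⟩ := h.exists_apply_eq y
  exacts [⟨_, h.cycleTriple_mem x b i, by simp⟩, ⟨_, h.cycleTriple_mem x b i, by simp⟩,
    ⟨_, h.joinTriple_mem x, by simp⟩]

theorem exists_mem_two_le_degree (h : IsQAttachment S T ι P Q c) {s : Finset β} (hs : s ∈ T) :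
    ∃ a ∈ s, ∃ b ∈ s, a ≠ b ∧ 2 ≤ degree T a ∧ 2 ≤ degree T b := by
  have hne {a b d} (e : ({a, b, d} : Finset β) ∈ T) : a ≠ b :=
    (ne_of_card_triple (h.isPSTS.1 _ e)).1
  rcases h.mem_iff.1 hs with ⟨s', hs', rfl⟩ | ⟨x, hx⟩
  · have := h.isPSTS_base.1 s' hs'
    obtain ⟨a, ha, b, hb, hab⟩ := one_lt_card.1 (show 1 < #s' by omega)
    exact ⟨_, mem_image_of_mem _ ha, _, mem_image_of_mem _ hb, h.injective.ne hab,
      le_trans (by norm_num) (h.four_le_degree_root a),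
      le_trans (by norm_num) (h.four_le_degree_root b)⟩
  · obtain ⟨r, ⟨b, i, rfl⟩ | rfl, rfl⟩ := (h.labeling x).mem_iff.1 hx
    · exact ⟨_, mem_image_of_mem _ (by simp [cycleTriple]), _,
        mem_image_of_mem _ (by simp [cycleTriple]), hne (h.cycleTriple_mem x b i),
        h.two_le_degree_corner b i, h.two_le_degree_corner b (i + 1)⟩
    · exact ⟨_, mem_image_of_mem _ (by simp [joinTriple]), _,
        mem_image_of_mem _ (by simp [joinTriple]), hne (h.joinTriple_mem x),
        h.two_le_degree_corner false 1, h.two_le_degree_corner true 1⟩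

theorem root_notMem_of_mid_mem (h : IsQAttachment S T ι P Q c) {s : Finset β} (hs : s ∈ T)
    {b : Bool} (hmid : c x (mid b 1) ∈ s) : ι x ∉ s := by
  have h1 := zmod_one_ne_zero ((h.labeling x).three_le b)
  have h2 := zmod_two_ne_zero ((h.labeling x).three_le b)
  obtain ⟨r, hr, rfl⟩ := h.exists_mem_triples_of_mem (not_isRoot_mid b 1) hs hmid
  obtain rfl := mem_triples_and_mid_mem.1 hr
  simp [cycleTriple, eq_comm (a := ι x), (h.labeling x).apply_eq_root_iff, isRoot_corner,
    not_isRoot_mid, h1, one_add_one_eq_two, h2]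

theorem root_notMem_of_extra_mem (h : IsQAttachment S T ι P Q c) {s : Finset β} (hs : s ∈ T)
    (hextra : c x extra ∈ s) : ι x ∉ s := by
  have h1 b := zmod_one_ne_zero ((h.labeling x).three_le b)
  obtain ⟨r, hr, rfl⟩ := h.exists_mem_triples_of_mem not_isRoot_extra hs hextra
  obtain rfl := mem_triples_and_extra_mem.1 hr
  simp [joinTriple, eq_comm (a := ι x), (h.labeling x).apply_eq_root_iff, isRoot_corner,
    not_isRoot_extra, h1]

theorem exists_not_collinear_root (h : IsQAttachment S T ι P Q c) (x : α) (b : β) :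
    ∃ d, d ≠ ι x ∧ d ≠ b ∧ ∀ s ∈ T, ι x ∈ s → d ∉ s := by
  by_cases hb : c x extra = b
  · refine ⟨c x (mid false 1), (h.labeling x).apply_eq_root_iff.not.2 (not_isRoot_mid _ _), ?_,
      fun s hs hxs hds => h.root_notMem_of_mid_mem hs hds hxs⟩
    intro e
    simpa [not_isRoot_extra] using (h.labeling x).eq_of_apply_eq (e.trans hb.symm)
  · exact ⟨c x extra, (h.labeling x).apply_eq_root_iff.not.2 not_isRoot_extra, hb,
      fun s hs hxs hds => h.root_notMem_of_extra_mem hs hds hxs⟩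

end IsQAttachment

theorem IsPSTS.exists_not_collinear {β : Type*} [Fintype β] {T : Finset (Finset β)} (hT : IsPSTS T)
    (a b : β) (h : 3 * degree T a + 2 < Fintype.card β) :
    ∃ d, d ≠ a ∧ d ≠ b ∧ ∀ s ∈ T, a ∈ s → d ∉ s := by
  let U := {s ∈ T | a ∈ s}.biUnion id
  have hU : #U ≤ degree T a * 3 :=
    card_biUnion_le_card_mul _ _ 3 fun s hs => (hT.1 s (mem_filter.1 hs).1).le
  have hlt : #(insert a (insert b U)) < #(univ : Finset β) := by
    have := card_insert_le a (insert b U)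
    have := card_insert_le b U
    rw [card_univ]
    omega
  obtain ⟨d, -, hd⟩ := exists_mem_notMem_of_card_lt_card hlt
  simp only [U, mem_insert, mem_biUnion, mem_filter, id, not_or, not_exists, not_and, and_imp] at hd
  exact ⟨d, hd.1, hd.2.1, hd.2.2⟩

theorem IsQAttachment.nonempty_autGroup_cameronSTS_mulEquiv {α β : Type*} [Fintype β]
    {S : Finset (Finset α)} {T : Finset (Finset β)} {ι : α → β} {P : α → Finset β}
    {Q : α → Finset (Finset β)} {m : Bool → ℕ} {c : α → QPoint m → β}
    (h : IsQAttachment S T ι P Q c) (hβ : 14 ≤ Fintype.card β) :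
    Nonempty (autGroup (CameronSTS T) ≃* autGroup T) := by
  refine _root_.nonempty_autGroup_cameronSTS_mulEquiv h.isPSTS hβ h.degree_pos
    (fun t ht => h.exists_mem_two_le_degree ht) fun a b _ => ?_
  obtain ⟨x, rfl⟩ | ha := h.exists_eq_root_or_degree_le_three a
  · exact h.exists_not_collinear_root x b
  · exact h.isPSTS.exists_not_collinear a b (by omega)

theorem stmt15_general {α β : Type*} [Fintype α] [Nonempty α] [Fintype β] (n : ℕ)
    (TV : Finset (Finset α)) (hV : IsPSTS TV) (TV' : Finset (Finset β)) (ι : α → β)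
    (Qp : α → Finset β) (Qt : α → Finset (Finset β)) (hQ : ∀ x, IsQ n (Qt x) (Qp x) (ι x))
    (hdisj : ∀ x y, x ≠ y → Qp x ∩ Qp y = ∅) (hcover : univ = univ.biUnion Qp)
    (htri : TV' = (TV.image fun t => t.image ι) ∪ univ.biUnion Qt) :
    Fintype.card β = Fintype.card α * (4 * n + 10) ∧
    IsPSTS TV' ∧
    IsSTS (CameronSTS TV') ∧
    Nonempty (autGroup (CameronSTS TV') ≃* autGroup TV') ∧
    Nonempty (autGroup TV' ≃* autGroup TV) := by
  choose c hc using fun x => (hQ x).exists_isQLabeling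
  have h : IsQAttachment TV TV' ι Qp Qt c :=
    { isPSTS_base := hV
      isPSTS_piece := fun x => (hQ x).isPSTS
      subset_pts := fun hs => (hc _).subset_pts hs
      root_mem := fun x => (hc x).root_mem
      eq_of_mem := fun {x x' y} hx hx' => by
        by_contra hne
        exact notMem_empty y (hdisj x x' hne ▸ mem_inter.2 ⟨hx, hx'⟩)
      exists_mem := fun y => by simpa using (hcover ▸ mem_univ y : y ∈ univ.biUnion Qp)
      mem_iff := fun {s} => by
        simp only [htri, mem_union, mem_image, mem_biUnion, mem_univ, true_and, eq_comm (a := s)]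
      labeling := hc }
  have hcard : Fintype.card β = Fintype.card α * (4 * n + 10) := by
    rw [← card_univ, hcover, card_biUnion fun x _ y _ hne => disjoint_iff_inter_eq_empty.2
      (hdisj x y hne), sum_congr rfl fun x _ => (hQ x).card_pts, sum_const, card_univ, smul_eq_mul]
  have hn : 3 ≤ n + 2 := (hc (Classical.arbitrary α)).three_le false
  have hβ : 14 ≤ Fintype.card β := by
    nlinarith [Fintype.card_pos (α := α)]
  exact ⟨hcard, h.isPSTS, isSTS_cameronSTS h.isPSTS, h.nonempty_autGroup_cameronSTS_mulEquiv hβ,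
    (h.autRestrictIso (cycleLength_injective n)).nonempty_mulEquiv h.injective⟩

/-- **Section 4.1 (Proposition 4.5).** Let `V` be a PSTS on `n ≥ 1` points and `V'`
the PSTS on `4n² + 10n` points obtained by attaching a copy `Q(x)` of `Q(z)` to each
point `x` of `V` (pairwise disjoint, meeting `V` exactly in `x`).  Let `P` be the
projective space over `GF(2)` on the nonempty subsets of `V'` and let `U` be
Cameron's modification of `P` along the triples of `V'`.  Then `U` is a Steiner
triple system and `Aut U ≅ Aut V' ≅ Aut V`. -/
theorem stmt15 {α β : Type*} [Fintype α] [Fintype β]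
    (TV : Finset (Finset α)) (hV : IsPSTS TV) (hn : 1 ≤ Fintype.card α)
    (TV' : Finset (Finset β)) (ι : α → β) (hι : Function.Injective ι)
    (Qp : α → Finset β) (Qt : α → Finset (Finset β))
    (hQ : ∀ x : α, IsQ (Fintype.card α) (Qt x) (Qp x) (ι x))
    (hmeet : ∀ x : α, Qp x ∩ Finset.univ.image ι = {ι x})
    (hdisj : ∀ x y : α, x ≠ y → Qp x ∩ Qp y = ∅)
    (hcover : (Finset.univ : Finset β) = Finset.univ.biUnion Qp)
    (htri : TV' = (TV.image fun t => t.image ι) ∪ Finset.univ.biUnion Qt) :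
    Fintype.card β = 4 * Fintype.card α ^ 2 + 10 * Fintype.card α ∧
    IsPSTS TV' ∧
    IsSTS (CameronSTS TV') ∧
    Nonempty (autGroup (CameronSTS TV') ≃* autGroup TV') ∧
    Nonempty (autGroup TV' ≃* autGroup TV) := by
  have := Fintype.card_pos_iff.1 hn
  obtain ⟨hcard, h⟩ := stmt15_general _ TV hV TV' ι Qp Qt hQ hdisj hcover htri
  exact ⟨by rw [hcard]; ring, h⟩

end
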